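/- arXiv:1412.5679 — 8 statements merged into one kernel-verified Lean document; each statement's English description precedes it below -/
import Mathlib

section
/- There is an absolute constant C > 0 with the following property. Let p ∈ [0,10] and let g : (0, π) → ℝ be locally absolutely continuous with a.e. derivative g′. Then ∫_0^π |g(θ)|² (sin θ)^p dθ ≤ C ( ∫_0^π |g′(θ)|² (sin θ)^{p+2} dθ + ∫_0^π |g(θ)|² (sin θ)^{p+2} dθ ), where all integrals are allowed to be +∞. -/
open MeasureTheory

/-- `g` is locally absolutely continuous on the set `s` with a.e. derivative `g'`:
`g'` is integrable on compact subintervals of `s` and the fundamental theorem of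
calculus representation holds between any two points of `s`. -/
def LocAC (s : Set ℝ) (f f' : ℝ → ℝ) : Prop :=
  (∀ a ∈ s, ∀ b ∈ s, IntervalIntegrable f' volume a b) ∧
  (∀ a ∈ s, ∀ b ∈ s, f b - f a = ∫ t in a..b, f' t)

/-!
For `φ = 2 / (p + 1) * sin ^ (p + 1) * cos` one has `φ' = 2 u - w` with `u = sin ^ p` and `w` a
multiple of `sin ^ (p + 2)`. On `[a, b] ⊆ (0, π)` with `a` near `0` and `b` near `π`, the integral
of `(g² φ)' = 2 g g' φ + g² φ'` is the difference of two boundary terms, and it is nonpositive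
because `φ a ≥ 0 ≥ φ b`. As `φ² ≤ u v` with `v` a multiple of `sin ^ (p + 2)`, Young's inequality
`-2 g g' φ ≤ g² u + g'² v` then bounds `∫ g² u` by `∫ g'² v + ∫ g² w`.
-/

section

open Set Filter Topology ENNReal

lemma lintegral_ofReal_le_of_integral_nonpos {α : Type*} [MeasurableSpace α] {μ : Measure α}
    {F D G : α → ℝ} (hD : Integrable D μ) (hD_nonpos : ∫ x, D x ∂μ ≤ 0) (hF : 0 ≤ᵐ[μ] F)
    (hFDG : ∀ᵐ x ∂μ, F x ≤ D x + G x) :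
    ∫⁻ x, ENNReal.ofReal (F x) ∂μ ≤ ∫⁻ x, ENNReal.ofReal (G x) ∂μ := by
  have hneg_ne_top : ∫⁻ x, ENNReal.ofReal (-D x) ∂μ ≠ ∞ := hD.neg.lintegral_lt_top.ne
  have hpos_le_neg : ∫⁻ x, ENNReal.ofReal (D x) ∂μ ≤ ∫⁻ x, ENNReal.ofReal (-D x) ∂μ := by
    rw [integral_eq_lintegral_pos_part_sub_lintegral_neg_part hD, sub_nonpos] at hD_nonpos
    exact (ENNReal.toReal_le_toReal hD.lintegral_lt_top.ne hneg_ne_top).1 hD_nonpos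
  have hpointwise : ∀ᵐ x ∂μ, ENNReal.ofReal (F x) + ENNReal.ofReal (-D x) ≤
      ENNReal.ofReal (G x) + ENNReal.ofReal (D x) := by
    filter_upwards [hF, hFDG] with x hFx hx
    rcases le_total 0 (D x) with hDx | hDx
    · rw [ENNReal.ofReal_of_nonpos (neg_nonpos.2 hDx), add_zero]
      exact (ENNReal.ofReal_le_ofReal (by linarith)).trans ENNReal.ofReal_add_le
    · rw [ENNReal.ofReal_of_nonpos hDx, add_zero, ← ENNReal.ofReal_add hFx (neg_nonneg.2 hDx)]
      exact ENNReal.ofReal_le_ofReal (by linarith)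
  refine (ENNReal.add_le_add_iff_right hneg_ne_top).1 ?_
  calc ∫⁻ x, ENNReal.ofReal (F x) ∂μ + ∫⁻ x, ENNReal.ofReal (-D x) ∂μ
      = ∫⁻ x, ENNReal.ofReal (F x) + ENNReal.ofReal (-D x) ∂μ :=
        (lintegral_add_right' _ hD.aemeasurable.neg.ennreal_ofReal).symm
    _ ≤ ∫⁻ x, ENNReal.ofReal (G x) + ENNReal.ofReal (D x) ∂μ := lintegral_mono_ae hpointwise
    _ = ∫⁻ x, ENNReal.ofReal (G x) ∂μ + ∫⁻ x, ENNReal.ofReal (D x) ∂μ :=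
        lintegral_add_right' _ hD.aemeasurable.ennreal_ofReal
    _ ≤ ∫⁻ x, ENNReal.ofReal (G x) ∂μ + ∫⁻ x, ENNReal.ofReal (-D x) ∂μ := by gcongr

lemma setLIntegral_Ioo_le_of_eventually_Ioc {μ : Measure ℝ} {A B : ℝ} {f : ℝ → ℝ≥0∞} {K : ℝ≥0∞}
    (hf : AEMeasurable f (μ.restrict (Ioo A B)))
    (hK : ∀ᶠ q in 𝓝[>] A ×ˢ 𝓝[<] B, ∫⁻ x in Ioc q.1 q.2, f x ∂μ ≤ K) :
    ∫⁻ x in Ioo A B, f x ∂μ ≤ K := by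
  have hcover : AECover (μ.restrict (Ioo A B)) (𝓝[>] A ×ˢ 𝓝[<] B)
      (fun q : ℝ × ℝ => Ioc q.1 q.2) :=
    aecover_Ioo_of_Ioc (tendsto_fst.mono_right nhdsWithin_le_nhds)
      (tendsto_snd.mono_right nhdsWithin_le_nhds)
  refine le_of_tendsto (hcover.lintegral_tendsto_of_countably_generated hf) (hK.mono fun q hq => ?_)
  exact (lintegral_mono' (Measure.restrict_mono_measure Measure.restrict_le_self _) le_rfl).trans hq

lemma quadratic_form_nonneg {u v φ : ℝ} (hu : 0 ≤ u) (hv : 0 ≤ v) (hφ : φ ^ 2 ≤ u * v) (x y : ℝ) :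
    0 ≤ x ^ 2 * u + 2 * (x * y * φ) + y ^ 2 * v := by
  rcases hu.eq_or_lt with rfl | hu
  · obtain rfl : φ = 0 := by simpa using hφ
    simp only [mul_zero, zero_add]
    positivity
  · refine nonneg_of_mul_nonneg_right ?_ hu
    calc 0 ≤ (u * x + φ * y) ^ 2 + (u * v - φ ^ 2) * y ^ 2 :=
          add_nonneg (sq_nonneg _) (mul_nonneg (sub_nonneg.2 hφ) (sq_nonneg y))
      _ = u * (x ^ 2 * u + 2 * (x * y * φ) + y ^ 2 * v) := by ring

namespace LocAC

variable {s : Set ℝ} {f f' g g' : ℝ → ℝ} {a b : ℝ}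

lemma of_hasDerivAt [s.OrdConnected] (hf : ∀ x ∈ s, HasDerivAt f (f' x) x)
    (hf' : ContinuousOn f' s) : LocAC s f f' := by
  have hint (a) (ha : a ∈ s) (b) (hb : b ∈ s) : IntervalIntegrable f' volume a b :=
    (hf'.mono (OrdConnected.uIcc_subset ‹_› ha hb)).intervalIntegrable
  refine ⟨hint, fun a ha b hb => ?_⟩
  exact (intervalIntegral.integral_eq_sub_of_hasDerivAt
    (fun x hx => hf x (OrdConnected.uIcc_subset ‹_› ha hb hx)) (hint a ha b hb)).symm

lemma eq_add_integral (hf : LocAC s f f') (ha : a ∈ s) (hb : b ∈ s) :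
    f b = f a + ∫ t in a..b, f' t :=
  eq_add_of_sub_eq' (hf.2 a ha b hb)

lemma absolutelyContinuousOnInterval (hf : LocAC s f f') (hab : uIcc a b ⊆ s) :
    AbsolutelyContinuousOnInterval f a b := by
  have ha : a ∈ s := hab left_mem_uIcc
  have hprim : AbsolutelyContinuousOnInterval (fun x => f a + ∫ t in a..x, f' t) a b :=
    contDiffOn_const.absolutelyContinuousOnInterval.add <|
      (hf.1 a ha b (hab right_mem_uIcc)).absolutelyContinuousOnInterval_intervalIntegral
        left_mem_uIcc
  refine Tendsto.congr' ?_ hprim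
  filter_upwards [mem_inf_of_right (mem_principal_self _)] with E hE
  refine Finset.sum_congr rfl fun i hi => ?_
  rw [← hf.eq_add_integral ha (hab (hE.1 i hi).1), ← hf.eq_add_integral ha (hab (hE.1 i hi).2)]

lemma ae_deriv_eq (hf : LocAC s f f') (hab : uIcc a b ⊆ s) :
    ∀ᵐ x, x ∈ uIoc a b → deriv f x = f' x := by
  have ha : a ∈ s := hab left_mem_uIcc
  have hne : ∀ᵐ x : ℝ, x ≠ max a b := by simp [ae_iff, measure_singleton]
  filter_upwards [(hf.1 a ha b (hab right_mem_uIcc)).ae_hasDerivAt_integral, hne]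
    with x hderiv hxne hx
  have hnhds : uIcc a b ∈ 𝓝 x := Icc_mem_nhds hx.1 (hx.2.lt_of_ne hxne)
  have hfx : f =ᶠ[𝓝 x] fun y => f a + ∫ t in a..y, f' t := by
    filter_upwards [hnhds] with y hy using hf.eq_add_integral ha (hab hy)
  rw [hfx.deriv_eq]
  exact ((hderiv (uIoc_subset_uIcc hx) a left_mem_uIcc).const_add (f a)).deriv

lemma continuousOn (hf : LocAC s f f') (hs : IsOpen s) : ContinuousOn f s := by
  intro x hx
  obtain ⟨ε, hε, hball⟩ := Metric.nhds_basis_closedBall.mem_iff.1 (hs.mem_nhds hx)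
  rw [Real.closedBall_eq_Icc, ← uIcc_of_le (by linarith)] at hball
  have hnhds : uIcc (x - ε) (x + ε) ∈ 𝓝 x := by
    rw [uIcc_of_le (by linarith)]
    exact Icc_mem_nhds (by linarith) (by linarith)
  exact ((hf.absolutelyContinuousOnInterval hball).continuousOn.continuousAt
    hnhds).continuousWithinAt

lemma mul [s.OrdConnected] (hf : LocAC s f f') (hg : LocAC s g g') :
    LocAC s (fun x => f x * g x) (fun x => f' x * g x + f x * g' x) := by
  refine ⟨fun a ha b hb => ?_, fun a ha b hb => ?_⟩
  all_goals
    have hab : uIcc a b ⊆ s := OrdConnected.uIcc_subset ‹_› ha hb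
    have hfac := hf.absolutelyContinuousOnInterval hab
    have hgac := hg.absolutelyContinuousOnInterval hab
  · exact ((hf.1 a ha b hb).mul_continuousOn hgac.continuousOn).add
      ((hg.1 a ha b hb).continuousOn_mul hfac.continuousOn)
  · rw [← hfac.integral_deriv_mul_eq_sub hgac]
    apply intervalIntegral.integral_congr_ae
    filter_upwards [hf.ae_deriv_eq hab, hg.ae_deriv_eq hab] with x hfx hgx hx
    rw [hfx hx, hgx hx]

variable {φ u v w : ℝ → ℝ}

lemma setLIntegral_Ioc_sq_mul_le [s.OrdConnected] (hg : LocAC s g g')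
    (hφ : LocAC s φ fun x => 2 * u x - w x) (hu : ∀ x ∈ s, 0 ≤ u x) (hv : ∀ x ∈ s, 0 ≤ v x)
    (hφuv : ∀ x ∈ s, φ x ^ 2 ≤ u x * v x) (ha : a ∈ s) (hb : b ∈ s) (hab : a ≤ b)
    (hφa : 0 ≤ φ a) (hφb : φ b ≤ 0) :
    ∫⁻ x in Ioc a b, ENNReal.ofReal (g x ^ 2 * u x) ≤
      ∫⁻ x in Ioc a b, ENNReal.ofReal (g' x ^ 2 * v x + g x ^ 2 * w x) := by
  have hsq := (hg.mul hg).mul hφ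
  have hmem : ∀ᵐ x ∂volume.restrict (Ioc a b), x ∈ s := by
    filter_upwards [ae_restrict_mem measurableSet_Ioc] with x hx
    exact OrdConnected.out ‹_› ha hb (Ioc_subset_Icc_self hx)
  refine lintegral_ofReal_le_of_integral_nonpos
    ((intervalIntegrable_iff_integrableOn_Ioc_of_le hab).1 (hsq.1 a ha b hb)) ?_ ?_ ?_
  · rw [← intervalIntegral.integral_of_le hab, ← hsq.2 a ha b hb, sub_nonpos]
    exact (mul_nonpos_of_nonneg_of_nonpos (mul_self_nonneg _) hφb).trans
      (mul_nonneg (mul_self_nonneg _) hφa)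
  · filter_upwards [hmem] with x hx using mul_nonneg (sq_nonneg _) (hu x hx)
  · filter_upwards [hmem] with x hx
    linarith [quadratic_form_nonneg (hu x hx) (hv x hx) (hφuv x hx) (g x) (g' x)]

theorem lintegral_sq_mul_le_add {A B : ℝ} (hg : LocAC (Ioo A B) g g')
    (hφ : LocAC (Ioo A B) φ fun x => 2 * u x - w x)
    (hu : ∀ x ∈ Ioo A B, 0 ≤ u x) (hv : ∀ x ∈ Ioo A B, 0 ≤ v x)
    (hφuv : ∀ x ∈ Ioo A B, φ x ^ 2 ≤ u x * v x)
    (hum : AEMeasurable u (volume.restrict (Ioo A B)))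
    (hwm : AEMeasurable w (volume.restrict (Ioo A B)))
    (hφA : ∀ᶠ x in 𝓝[>] A, 0 ≤ φ x) (hφB : ∀ᶠ x in 𝓝[<] B, φ x ≤ 0) :
    ∫⁻ x in Ioo A B, ENNReal.ofReal (g x ^ 2 * u x) ≤
      (∫⁻ x in Ioo A B, ENNReal.ofReal (g' x ^ 2 * v x)) +
        ∫⁻ x in Ioo A B, ENNReal.ofReal (g x ^ 2 * w x) := by
  rcases le_or_gt B A with hBA | hAB
  · simp [Ioo_eq_empty_of_le hBA]
  have hgm : AEMeasurable g (volume.restrict (Ioo A B)) :=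
    (hg.continuousOn isOpen_Ioo).aemeasurable measurableSet_Ioo
  calc ∫⁻ x in Ioo A B, ENNReal.ofReal (g x ^ 2 * u x)
      ≤ ∫⁻ x in Ioo A B, ENNReal.ofReal (g' x ^ 2 * v x + g x ^ 2 * w x) := by
        obtain ⟨m, hAm, hmB⟩ := exists_between hAB
        refine setLIntegral_Ioo_le_of_eventually_Ioc ((hgm.pow_const 2).mul hum).ennreal_ofReal ?_
        filter_upwards [(hφA.and (Ioo_mem_nhdsGT hAm)).prod_mk (hφB.and (Ioo_mem_nhdsLT hmB))]
          with ⟨a, b⟩ ⟨⟨hφa, hAa, ham⟩, hφb, hmb, hbB⟩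
        have ha : a ∈ Ioo A B := ⟨hAa, ham.trans hmB⟩
        have hb : b ∈ Ioo A B := ⟨hAm.trans hmb, hbB⟩
        exact (hg.setLIntegral_Ioc_sq_mul_le hφ hu hv hφuv ha hb (ham.trans hmb).le hφa hφb).trans
          (lintegral_mono_set fun x hx => ⟨hAa.trans hx.1, hx.2.trans_lt hbB⟩)
    _ ≤ ∫⁻ x in Ioo A B, ENNReal.ofReal (g' x ^ 2 * v x) + ENNReal.ofReal (g x ^ 2 * w x) :=
        lintegral_mono fun x => ENNReal.ofReal_add_le
    _ = _ := lintegral_add_right' _ ((hgm.pow_const 2).mul hwm).ennreal_ofReal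

end LocAC

end

section

open Set Filter Topology Real

lemma hasDerivAt_sin_rpow_mul_cos (p : ℝ) {θ : ℝ} (hθ : 0 < sin θ) :
    HasDerivAt (fun x => sin x ^ (p + 1) * cos x)
      ((p + 1) * sin θ ^ p - (p + 2) * sin θ ^ (p + 2)) θ := by
  convert! ((hasDerivAt_sin θ).rpow_const (p := p + 1) (Or.inl hθ.ne')).mul (hasDerivAt_cos θ)
    using 1
  rw [add_sub_cancel_right, rpow_add hθ, rpow_add hθ, rpow_one, rpow_two]
  linear_combination (-(p + 1) * sin θ ^ p) * cos_sq' θ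

variable {p : ℝ}

lemma locAC_const_mul_sin_rpow_mul_cos (hp : p + 1 ≠ 0) :
    LocAC (Ioo 0 π) (fun θ => 2 / (p + 1) * (sin θ ^ (p + 1) * cos θ))
      fun θ => 2 * sin θ ^ p - (2 + 2 / (p + 1)) * sin θ ^ (p + 2) := by
  have hcont (q : ℝ) : ContinuousOn (fun θ => sin θ ^ q) (Ioo 0 π) :=
    continuous_sin.continuousOn.rpow_const fun θ hθ => Or.inl (sin_pos_of_mem_Ioo hθ).ne'
  refine LocAC.of_hasDerivAt (fun θ hθ => ?_)
    (((hcont p).const_mul 2).sub ((hcont (p + 2)).const_mul _))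
  convert! (hasDerivAt_sin_rpow_mul_cos p (sin_pos_of_mem_Ioo hθ)).const_mul (2 / (p + 1)) using 1
  field_simp
  ring

lemma sq_const_mul_sin_rpow_mul_cos_le (c p : ℝ) {θ : ℝ} (hθ : 0 < sin θ) :
    (c * (sin θ ^ (p + 1) * cos θ)) ^ 2 ≤ sin θ ^ p * (c ^ 2 * sin θ ^ (p + 2)) := by
  have hrpow : (sin θ ^ (p + 1)) ^ 2 = sin θ ^ p * sin θ ^ (p + 2) := by
    rw [← rpow_mul_natCast hθ.le, ← rpow_add hθ]
    push_cast
    ring_nf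
  calc (c * (sin θ ^ (p + 1) * cos θ)) ^ 2
      = c ^ 2 * (sin θ ^ p * sin θ ^ (p + 2)) * cos θ ^ 2 := by rw [← hrpow]; ring
    _ ≤ c ^ 2 * (sin θ ^ p * sin θ ^ (p + 2)) :=
        mul_le_of_le_one_right (by positivity) (cos_sq_le_one θ)
    _ = sin θ ^ p * (c ^ 2 * sin θ ^ (p + 2)) := by ring

lemma eventually_sin_rpow_mul_cos_nonneg (q : ℝ) : ∀ᶠ θ in 𝓝[>] 0, 0 ≤ sin θ ^ q * cos θ := by
  filter_upwards [Ioo_mem_nhdsGT pi_div_two_pos] with θ hθ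
  exact mul_nonneg
    (rpow_nonneg (sin_nonneg_of_nonneg_of_le_pi hθ.1.le (by linarith [hθ.1, hθ.2])) q)
    (cos_nonneg_of_neg_pi_div_two_le_of_le (by linarith [hθ.1, hθ.2]) hθ.2.le)

lemma eventually_sin_rpow_mul_cos_nonpos (q : ℝ) : ∀ᶠ θ in 𝓝[<] π, sin θ ^ q * cos θ ≤ 0 := by
  filter_upwards [Ioo_mem_nhdsLT (half_lt_self pi_pos)] with θ hθ
  exact mul_nonpos_of_nonneg_of_nonpos
    (rpow_nonneg (sin_nonneg_of_nonneg_of_le_pi (by linarith [hθ.1, pi_pos]) hθ.2.le) q)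
    (cos_nonpos_of_pi_div_two_le_of_le hθ.1.le (by linarith [hθ.2, pi_pos]))

theorem lintegral_sq_mul_sin_rpow_le (hp : -1 < p) {g g' : ℝ → ℝ} (hg : LocAC (Ioo 0 π) g g') :
    ∫⁻ θ in Ioo 0 π, ENNReal.ofReal (g θ ^ 2 * sin θ ^ p) ≤
      ENNReal.ofReal ((2 / (p + 1)) ^ 2) *
          (∫⁻ θ in Ioo 0 π, ENNReal.ofReal (g' θ ^ 2 * sin θ ^ (p + 2))) +
        ENNReal.ofReal (2 + 2 / (p + 1)) *
          ∫⁻ θ in Ioo 0 π, ENNReal.ofReal (g θ ^ 2 * sin θ ^ (p + 2)) := by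
  have hp1 : 0 < p + 1 := by linarith
  have hsin (q : ℝ) (θ : ℝ) (hθ : θ ∈ Ioo 0 π) : 0 ≤ sin θ ^ q :=
    rpow_nonneg (sin_pos_of_mem_Ioo hθ).le q
  have hsin_meas (q : ℝ) : Measurable fun θ => sin θ ^ q := measurable_sin.pow_const q
  have hpull {c : ℝ} (hc : 0 ≤ c) (f : ℝ → ℝ) :
      ENNReal.ofReal c * (∫⁻ θ in Ioo 0 π, ENNReal.ofReal (f θ ^ 2 * sin θ ^ (p + 2))) =
        ∫⁻ θ in Ioo 0 π, ENNReal.ofReal (f θ ^ 2 * (c * sin θ ^ (p + 2))) := by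
    simp only [← lintegral_const_mul' _ _ ENNReal.ofReal_ne_top, ← ENNReal.ofReal_mul hc,
      mul_left_comm c]
  rw [hpull (by positivity), hpull (by positivity)]
  exact hg.lintegral_sq_mul_le_add (locAC_const_mul_sin_rpow_mul_cos hp1.ne') (hsin p)
    (fun θ hθ => mul_nonneg (sq_nonneg _) (hsin (p + 2) θ hθ))
    (fun θ hθ => sq_const_mul_sin_rpow_mul_cos_le _ p (sin_pos_of_mem_Ioo hθ))
    (hsin_meas p).aemeasurable ((hsin_meas (p + 2)).const_mul _).aemeasurable
    ((eventually_sin_rpow_mul_cos_nonneg (p + 1)).mono fun _ h => mul_nonneg (by positivity) h)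
    ((eventually_sin_rpow_mul_cos_nonpos (p + 1)).mono fun _ h =>
      mul_nonpos_of_nonneg_of_nonpos (by positivity) h)

theorem hardy_sin_pow_general {p₀ : ℝ} (hp₀ : -1 < p₀) :
    ∃ C : ℝ, 0 < C ∧ ∀ (p : ℝ) (g g' : ℝ → ℝ), p₀ ≤ p → LocAC (Ioo 0 π) g g' →
      ∫⁻ θ in Ioo 0 π, ENNReal.ofReal (g θ ^ 2 * sin θ ^ p) ≤
        ENNReal.ofReal C *
          ((∫⁻ θ in Ioo 0 π, ENNReal.ofReal (g' θ ^ 2 * sin θ ^ (p + 2))) +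
            ∫⁻ θ in Ioo 0 π, ENNReal.ofReal (g θ ^ 2 * sin θ ^ (p + 2))) := by
  have hp₀1 : 0 < p₀ + 1 := by linarith
  refine ⟨max ((2 / (p₀ + 1)) ^ 2) (2 + 2 / (p₀ + 1)), by positivity, fun p g g' hp hg => ?_⟩
  have hp1 : 0 < p + 1 := by linarith
  refine (lintegral_sq_mul_sin_rpow_le (by linarith) hg).trans ?_
  rw [mul_add (ENNReal.ofReal _)]
  gcongr
  · exact le_max_of_le_left (by gcongr)
  · exact le_max_of_le_right (by gcongr)

end

/-- Hardy-type inequality of Lemma A.2 (ii): for `p ∈ [0,10]` and `g ∈ H¹_loc((0,π))`,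
`∫_0^π g² (sin θ)^p ≤ C ( ∫_0^π (g')² (sin θ)^{p+2} + ∫_0^π g² (sin θ)^{p+2} )`. -/
theorem hardy_sin_pow :
    ∃ C : ℝ, 0 < C ∧
      ∀ (p : ℝ) (g g' : ℝ → ℝ), p ∈ Set.Icc (0 : ℝ) 10 →
        LocAC (Set.Ioo 0 Real.pi) g g' →
        (∫⁻ θ in Set.Ioo 0 Real.pi, ENNReal.ofReal ((g θ) ^ 2 * Real.sin θ ^ p)) ≤
          ENNReal.ofReal C *
            ((∫⁻ θ in Set.Ioo 0 Real.pi,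
                ENNReal.ofReal ((g' θ) ^ 2 * Real.sin θ ^ (p + 2))) +
             (∫⁻ θ in Set.Ioo 0 Real.pi,
                ENNReal.ofReal ((g θ) ^ 2 * Real.sin θ ^ (p + 2)))) := by
  obtain ⟨C, hC, hardy⟩ := hardy_sin_pow_general neg_one_lt_zero
  exact ⟨C, hC, fun p g g' hp => hardy p g g' hp.1⟩
end

section
/- There is an absolute constant C > 0 with the following property. Let h : [0, π] → ℝ be continuous with h(0) = h(π) = 0, and suppose h is locally absolutely continuous on (0, π) with a.e. derivative h′. Then ∫_0^π h(θ)² (sin θ)⁻³ dθ ≤ C ( ∫_0^π h′(θ)² (sin θ)⁻¹ dθ + ∫_0^π h(θ)² (sin θ)⁻¹ dθ ), where all integrals are allowed to be +∞. -/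
open MeasureTheory

open Set Filter Topology
open scoped ENNReal

/-!
Near an endpoint where `h` vanishes, `h x = ∫₀ˣ h'`, so Jensen's inequality gives
`|h x| ^ p ≤ x ^ (p - 1) * ∫₀ˣ |h'| ^ p`. Integrating against `x ^ (-(p + α))` and exchanging the
order of integration leaves `|h' t| ^ p` with the weight `∫ₜ x ^ (-(1 + α)) dx ≤ t ^ (-α) / α`.
On `(0, π / 2)` the weights `x` and `sin x` are comparable, and the reflection `x ↦ π - x` takes
care of the other half of `(0, π)`.
-/

section OneSidedLimits

variable {β γ : Type*} [LinearOrder β] [TopologicalSpace β] [OrderClosedTopology β]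
  [TopologicalSpace γ] {f : β → γ} {a b : β}

theorem tendsto_nhdsGT_of_continuousOn_Icc (hf : ContinuousOn f (Icc a b)) (hab : a < b) :
    Tendsto f (𝓝[>] a) (𝓝 (f a)) :=
  ((continuousWithinAt_Icc_iff_Ici hab).1 (hf a (left_mem_Icc.2 hab.le))).mono Ioi_subset_Ici_self

theorem tendsto_nhdsLT_of_continuousOn_Icc (hf : ContinuousOn f (Icc a b)) (hab : a < b) :
    Tendsto f (𝓝[<] b) (𝓝 (f b)) :=
  ((continuousWithinAt_Icc_iff_Iic hab).1 (hf b (right_mem_Icc.2 hab.le))).mono Iio_subset_Iic_self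

end OneSidedLimits

theorem rpow_lintegral_enorm_le {β E : Type*} [MeasurableSpace β] {μ : Measure β}
    [NormedAddCommGroup E] {f : β → E} {p : ℝ} (hp : 1 ≤ p) (hf : AEStronglyMeasurable f μ) :
    (∫⁻ x, ‖f x‖ₑ ∂μ) ^ p ≤ μ univ ^ (p - 1) * ∫⁻ x, ‖f x‖ₑ ^ p ∂μ := by
  have hp₀ : 0 < p := one_pos.trans_le hp
  have hle := eLpNorm'_le_eLpNorm'_mul_rpow_measure_univ one_pos hp hf
  simp only [eLpNorm'_eq_lintegral_enorm, ENNReal.rpow_one, div_one] at hle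
  calc (∫⁻ x, ‖f x‖ₑ ∂μ) ^ p
      ≤ ((∫⁻ x, ‖f x‖ₑ ^ p ∂μ) ^ (1 / p) * μ univ ^ (1 - 1 / p)) ^ p := by gcongr
    _ = μ univ ^ (p - 1) * ∫⁻ x, ‖f x‖ₑ ^ p ∂μ := by
        rw [ENNReal.mul_rpow_of_nonneg _ _ hp₀.le, ← ENNReal.rpow_mul, ← ENNReal.rpow_mul,
          one_div_mul_cancel hp₀.ne', ENNReal.rpow_one, sub_mul, one_div_mul_cancel hp₀.ne',
          one_mul, mul_comm]

theorem lintegral_mul_lintegral_Iio_swap {β : Type*} [LinearOrder β] [TopologicalSpace β]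
    [OrderClosedTopology β] [SecondCountableTopology β] [MeasurableSpace β]
    [OpensMeasurableSpace β] {μ ν : Measure β} [SFinite μ] [SFinite ν] {w g : β → ℝ≥0∞}
    (hw : AEMeasurable w μ) (hg : AEMeasurable g ν) :
    ∫⁻ x, w x * ∫⁻ t in Iio x, g t ∂ν ∂μ = ∫⁻ t, (∫⁻ x in Ioi t, w x ∂μ) * g t ∂ν := by
  let K : β → β → ℝ≥0∞ := fun x t ↦ {q : β × β | q.2 < q.1}.indicator (fun q ↦ w q.1 * g q.2) (x, t)
  have hK : AEMeasurable (Function.uncurry K) (μ.prod ν) :=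
    (hw.comp_fst.mul hg.comp_snd).indicator (measurableSet_lt measurable_snd measurable_fst)
  calc ∫⁻ x, w x * ∫⁻ t in Iio x, g t ∂ν ∂μ = ∫⁻ x, ∫⁻ t, K x t ∂ν ∂μ := by
        refine lintegral_congr fun x ↦ ?_
        rw [← lintegral_const_mul'' _ hg.restrict, ← lintegral_indicator measurableSet_Iio]
        rfl
    _ = ∫⁻ t, ∫⁻ x, K x t ∂μ ∂ν := lintegral_lintegral_swap hK
    _ = ∫⁻ t, (∫⁻ x in Ioi t, w x ∂μ) * g t ∂ν := by
        refine lintegral_congr fun t ↦ ?_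
        rw [← lintegral_mul_const'' _ hw.restrict, ← lintegral_indicator measurableSet_Ioi]
        rfl

theorem setLIntegral_Ioo_mul_setLIntegral_swap {a b : ℝ} {w g : ℝ → ℝ≥0∞}
    (hw : AEMeasurable w (volume.restrict (Ioo a b)))
    (hg : AEMeasurable g (volume.restrict (Ioo a b))) :
    ∫⁻ x in Ioo a b, w x * ∫⁻ t in Ioo a x, g t =
      ∫⁻ t in Ioo a b, (∫⁻ x in Ioo t b, w x) * g t := by
  calc ∫⁻ x in Ioo a b, w x * ∫⁻ t in Ioo a x, g t
      = ∫⁻ x in Ioo a b, w x * ∫⁻ t in Iio x, g t ∂volume.restrict (Ioo a b) := by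
        refine setLIntegral_congr_fun measurableSet_Ioo fun x hx ↦ ?_
        simp only [Measure.restrict_restrict measurableSet_Iio, inter_comm (Iio x), Ioo_inter_Iio,
          min_eq_right hx.2.le]
    _ = ∫⁻ t in Ioo a b, (∫⁻ x in Ioi t, w x ∂volume.restrict (Ioo a b)) * g t :=
        lintegral_mul_lintegral_Iio_swap hw hg
    _ = ∫⁻ t in Ioo a b, (∫⁻ x in Ioo t b, w x) * g t := by
        refine setLIntegral_congr_fun measurableSet_Ioo fun t ht ↦ ?_
        simp only [Measure.restrict_restrict measurableSet_Ioi, Ioi_inter_Ioo,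
          max_eq_left ht.1.le]

theorem setLIntegral_Ioo_comp_sub_left (f : ℝ → ℝ≥0∞) (a b c : ℝ) :
    ∫⁻ x in Ioo a b, f (c - x) = ∫⁻ x in Ioo (c - b) (c - a), f x := by
  simpa only [preimage_const_sub_Ioo, sub_sub_cancel] using
    (Measure.measurePreserving_sub_left volume c).setLIntegral_comp_preimage_emb
      (MeasurableEquiv.subLeft c).measurableEmbedding f (Ioo (c - b) (c - a))

theorem lintegral_Ioi_inv_rpow_one_add {α t : ℝ} (hα : 0 < α) (ht : 0 < t) :
    ∫⁻ x in Ioi t, ENNReal.ofReal (x ^ (1 + α))⁻¹ = ENNReal.ofReal (α⁻¹ * (t ^ α)⁻¹) := by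
  have hexp : -(1 + α) < -1 := by linarith
  calc ∫⁻ x in Ioi t, ENNReal.ofReal (x ^ (1 + α))⁻¹
      = ∫⁻ x in Ioi t, ENNReal.ofReal (x ^ (-(1 + α))) :=
        setLIntegral_congr_fun measurableSet_Ioi fun x hx ↦ by
          rw [Real.rpow_neg (ht.trans hx).le]
    _ = ENNReal.ofReal (∫ x in Ioi t, x ^ (-(1 + α))) :=
        (ofReal_integral_eq_lintegral_ofReal (integrableOn_Ioi_rpow_of_lt hexp ht)
          ((ae_restrict_mem measurableSet_Ioi).mono fun x hx ↦
            Real.rpow_nonneg (ht.trans hx).le _)).symm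
    _ = ENNReal.ofReal (α⁻¹ * (t ^ α)⁻¹) := by
        rw [integral_Ioi_rpow_of_lt hexp ht, show -(1 + α) + 1 = -α by ring, neg_div_neg_eq,
          Real.rpow_neg ht.le, div_eq_inv_mul]

theorem inv_sin_rpow_le {s x : ℝ} (hs : 0 ≤ s) (hx₀ : 0 < x) (hx : x ≤ Real.pi / 2) :
    (Real.sin x ^ s)⁻¹ ≤ (Real.pi / 2) ^ s * (x ^ s)⁻¹ := by
  have hpi : 0 < Real.pi / 2 := by positivity
  have hjordan : (Real.pi / 2)⁻¹ * x ≤ Real.sin x := by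
    simpa only [inv_div] using Real.mul_le_sin hx₀.le hx
  calc (Real.sin x ^ s)⁻¹ ≤ (((Real.pi / 2)⁻¹ * x) ^ s)⁻¹ := by gcongr
    _ = (Real.pi / 2) ^ s * (x ^ s)⁻¹ := by
        rw [Real.mul_rpow (inv_nonneg.2 hpi.le) hx₀.le, Real.inv_rpow hpi.le, mul_inv, inv_inv]

theorem inv_rpow_le_inv_sin_rpow {s x : ℝ} (hs : 0 ≤ s) (hx : x ∈ Ioo 0 Real.pi) :
    (x ^ s)⁻¹ ≤ (Real.sin x ^ s)⁻¹ := by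
  have hsin : 0 < Real.sin x := Real.sin_pos_of_mem_Ioo hx
  have hle : Real.sin x ≤ x := Real.sin_le hx.1.le
  gcongr

namespace LocAC

variable {s t : Set ℝ} {f f' : ℝ → ℝ} {a b p α : ℝ}

theorem mono (hf : LocAC s f f') (hts : t ⊆ s) : LocAC t f f' :=
  ⟨fun a ha b hb ↦ hf.1 a (hts ha) b (hts hb), fun a ha b hb ↦ hf.2 a (hts ha) b (hts hb)⟩

theorem comp_sub_left (hf : LocAC s f f') (c : ℝ) :
    LocAC ((c - ·) ⁻¹' s) (fun x ↦ f (c - x)) (fun x ↦ -f' (c - x)) := by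
  refine ⟨fun a ha b hb ↦ ?_, fun a ha b hb ↦ ?_⟩
  · simpa only [sub_sub_cancel, Pi.neg_def] using ((hf.1 _ ha _ hb).comp_sub_left c).neg
  · rw [intervalIntegral.integral_neg, intervalIntegral.integral_comp_sub_left f',
      ← intervalIntegral.integral_symm]
    exact hf.2 _ ha _ hb

theorem locallyIntegrableOn (hf : LocAC s f f') (hs : IsOpen s) : LocallyIntegrableOn f' s := by
  intro x hx
  obtain ⟨c, d, ⟨hcx, hxd⟩, hcd⟩ := mem_nhds_iff_exists_Ioo_subset.1 (hs.mem_nhds hx)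
  obtain ⟨c', hcc', hc'x⟩ := exists_between hcx
  obtain ⟨d', hxd', hd'd⟩ := exists_between hxd
  have hint : IntervalIntegrable f' volume c' d' :=
    hf.1 c' (hcd ⟨hcc', hc'x.trans hxd⟩) d' (hcd ⟨hcx.trans hxd', hd'd⟩)
  exact ⟨Ioc c' d', mem_nhdsWithin_of_mem_nhds (Ioc_mem_nhds hc'x hxd'), hint.1⟩

theorem enorm_le_lintegral (hf : LocAC (Ioo a b) f f') (hfa : Tendsto f (𝓝[>] a) (𝓝 0)) {x : ℝ}
    (hx : x ∈ Ioo a b) : ‖f x‖ₑ ≤ ∫⁻ t in Ioo a x, ‖f' t‖ₑ := by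
  have hlim : Tendsto (fun ε ↦ ‖f x - f ε‖ₑ) (𝓝[>] a) (𝓝 ‖f x‖ₑ) := by
    simpa only [sub_zero] using (tendsto_const_nhds.sub hfa).enorm
  refine le_of_tendsto hlim ?_
  filter_upwards [Ioo_mem_nhdsGT hx.1] with ε hε
  calc ‖f x - f ε‖ₑ = ‖∫ t in Ioc ε x, f' t‖ₑ := by
        rw [hf.2 ε ⟨hε.1, hε.2.trans hx.2⟩ x hx, intervalIntegral.integral_of_le hε.2.le]
    _ ≤ ∫⁻ t in Ioc ε x, ‖f' t‖ₑ := enorm_integral_le_lintegral_enorm _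
    _ = ∫⁻ t in Ioo ε x, ‖f' t‖ₑ := by rw [restrict_Ioo_eq_restrict_Ioc]
    _ ≤ ∫⁻ t in Ioo a x, ‖f' t‖ₑ := lintegral_mono_set (Ioo_subset_Ioo_left hε.1.le)

theorem ofReal_abs_rpow_le (hf : LocAC (Ioo a b) f f') (hfa : Tendsto f (𝓝[>] a) (𝓝 0))
    (hp : 1 ≤ p) {x : ℝ} (hx : x ∈ Ioo a b) :
    ENNReal.ofReal (|f x| ^ p) ≤
      ENNReal.ofReal ((x - a) ^ (p - 1)) * ∫⁻ t in Ioo a x, ENNReal.ofReal (|f' t| ^ p) := by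
  have hp₀ : 0 ≤ p := zero_le_one.trans hp
  have hmeas : AEStronglyMeasurable f' (volume.restrict (Ioo a x)) :=
    ((hf.mono (Ioo_subset_Ioo_right hx.2.le)).locallyIntegrableOn isOpen_Ioo).aestronglyMeasurable
  have hvol : volume.restrict (Ioo a x) univ = ENNReal.ofReal (x - a) := by
    rw [Measure.restrict_apply_univ, Real.volume_Ioo]
  simp only [← ENNReal.ofReal_rpow_of_nonneg (abs_nonneg _) hp₀, ← Real.enorm_eq_ofReal_abs,
    ← ENNReal.ofReal_rpow_of_nonneg (sub_nonneg.2 hx.1.le) (sub_nonneg.2 hp)]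
  calc ‖f x‖ₑ ^ p ≤ (∫⁻ t in Ioo a x, ‖f' t‖ₑ) ^ p := by
        gcongr
        exact hf.enorm_le_lintegral hfa hx
    _ ≤ ENNReal.ofReal (x - a) ^ (p - 1) * ∫⁻ t in Ioo a x, ‖f' t‖ₑ ^ p :=
        hvol ▸ rpow_lintegral_enorm_le hp hmeas

theorem lintegral_hardy (hf : LocAC (Ioo 0 b) f f') (hf₀ : Tendsto f (𝓝[>] 0) (𝓝 0))
    (hp : 1 ≤ p) (hα : 0 < α) :
    ∫⁻ x in Ioo 0 b, ENNReal.ofReal (|f x| ^ p * (x ^ (p + α))⁻¹) ≤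
      ENNReal.ofReal α⁻¹ * ∫⁻ x in Ioo 0 b, ENNReal.ofReal (|f' x| ^ p * (x ^ α)⁻¹) := by
  have hmeas : AEMeasurable (fun t ↦ ENNReal.ofReal (|f' t| ^ p)) (volume.restrict (Ioo 0 b)) :=
    ((hf.locallyIntegrableOn isOpen_Ioo).aestronglyMeasurable.norm.aemeasurable.pow_const
      p).ennreal_ofReal
  calc ∫⁻ x in Ioo 0 b, ENNReal.ofReal (|f x| ^ p * (x ^ (p + α))⁻¹)
      ≤ ∫⁻ x in Ioo 0 b, ENNReal.ofReal (x ^ (1 + α))⁻¹ *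
          ∫⁻ t in Ioo 0 x, ENNReal.ofReal (|f' t| ^ p) := by
        refine setLIntegral_mono' measurableSet_Ioo fun x hx ↦ ?_
        have hx₀ : 0 < x := hx.1
        have hsplit : (x ^ (p + α))⁻¹ * x ^ (p - 1) = (x ^ (1 + α))⁻¹ := by
          simp only [← Real.rpow_neg hx₀.le, ← Real.rpow_add hx₀]
          ring_nf
        rw [mul_comm, ENNReal.ofReal_mul (by positivity), ← hsplit,
          ENNReal.ofReal_mul (by positivity), mul_assoc]
        gcongr
        simpa only [sub_zero] using hf.ofReal_abs_rpow_le hf₀ hp hx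
    _ = ∫⁻ t in Ioo 0 b, (∫⁻ x in Ioo t b, ENNReal.ofReal (x ^ (1 + α))⁻¹) *
          ENNReal.ofReal (|f' t| ^ p) :=
        setLIntegral_Ioo_mul_setLIntegral_swap (by fun_prop) hmeas
    _ ≤ ∫⁻ t in Ioo 0 b, ENNReal.ofReal α⁻¹ * ENNReal.ofReal (|f' t| ^ p * (t ^ α)⁻¹) := by
        refine setLIntegral_mono' measurableSet_Ioo fun t ht ↦ ?_
        have ht₀ : 0 < t := ht.1
        rw [mul_comm (|f' t| ^ p), ENNReal.ofReal_mul (by positivity), ← mul_assoc,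
          ← ENNReal.ofReal_mul (by positivity), ← lintegral_Ioi_inv_rpow_one_add hα ht₀]
        gcongr
        exact Ioo_subset_Ioi_self
    _ = ENNReal.ofReal α⁻¹ * ∫⁻ x in Ioo 0 b, ENNReal.ofReal (|f' x| ^ p * (x ^ α)⁻¹) :=
        lintegral_const_mul' _ _ ENNReal.ofReal_ne_top

theorem lintegral_hardy_sin_left_half (hf : LocAC (Ioo 0 (Real.pi / 2)) f f')
    (hf₀ : Tendsto f (𝓝[>] 0) (𝓝 0)) (hp : 1 ≤ p) (hα : 0 < α) :
    ∫⁻ x in Ioo 0 (Real.pi / 2), ENNReal.ofReal (|f x| ^ p * (Real.sin x ^ (p + α))⁻¹) ≤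
      ENNReal.ofReal ((Real.pi / 2) ^ (p + α) / α) *
        ∫⁻ x in Ioo 0 (Real.pi / 2), ENNReal.ofReal (|f' x| ^ p * (Real.sin x ^ α)⁻¹) := by
  have hpi := Real.pi_pos
  calc ∫⁻ x in Ioo 0 (Real.pi / 2), ENNReal.ofReal (|f x| ^ p * (Real.sin x ^ (p + α))⁻¹)
      ≤ ∫⁻ x in Ioo 0 (Real.pi / 2), ENNReal.ofReal ((Real.pi / 2) ^ (p + α)) *
          ENNReal.ofReal (|f x| ^ p * (x ^ (p + α))⁻¹) := by
        refine setLIntegral_mono' measurableSet_Ioo fun x hx ↦ ?_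
        rw [← ENNReal.ofReal_mul (by positivity), mul_left_comm]
        gcongr
        exact inv_sin_rpow_le (by linarith) hx.1 hx.2.le
    _ = ENNReal.ofReal ((Real.pi / 2) ^ (p + α)) *
          ∫⁻ x in Ioo 0 (Real.pi / 2), ENNReal.ofReal (|f x| ^ p * (x ^ (p + α))⁻¹) :=
        lintegral_const_mul' _ _ ENNReal.ofReal_ne_top
    _ ≤ ENNReal.ofReal ((Real.pi / 2) ^ (p + α)) * (ENNReal.ofReal α⁻¹ *
          ∫⁻ x in Ioo 0 (Real.pi / 2), ENNReal.ofReal (|f' x| ^ p * (x ^ α)⁻¹)) := by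
        gcongr
        exact hf.lintegral_hardy hf₀ hp hα
    _ ≤ ENNReal.ofReal ((Real.pi / 2) ^ (p + α)) * (ENNReal.ofReal α⁻¹ *
          ∫⁻ x in Ioo 0 (Real.pi / 2), ENNReal.ofReal (|f' x| ^ p * (Real.sin x ^ α)⁻¹)) := by
        gcongr _ * (_ * ?_)
        refine setLIntegral_mono' measurableSet_Ioo fun x hx ↦ ?_
        gcongr ENNReal.ofReal (_ * ?_)
        exact inv_rpow_le_inv_sin_rpow hα.le ⟨hx.1, by linarith [hx.2]⟩
    _ = _ := by
        rw [← mul_assoc, ← ENNReal.ofReal_mul (by positivity), ← div_eq_mul_inv _ α]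

theorem lintegral_hardy_sin_right_half (hf : LocAC (Ioo (Real.pi / 2) Real.pi) f f')
    (hfπ : Tendsto f (𝓝[<] Real.pi) (𝓝 0)) (hp : 1 ≤ p) (hα : 0 < α) :
    ∫⁻ x in Ioo (Real.pi / 2) Real.pi, ENNReal.ofReal (|f x| ^ p * (Real.sin x ^ (p + α))⁻¹) ≤
      ENNReal.ofReal ((Real.pi / 2) ^ (p + α) / α) *
        ∫⁻ x in Ioo (Real.pi / 2) Real.pi,
          ENNReal.ofReal (|f' x| ^ p * (Real.sin x ^ α)⁻¹) := by
  have hreflect : Tendsto (fun x ↦ Real.pi - x) (𝓝[>] 0) (𝓝[<] Real.pi) := by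
    refine tendsto_nhdsWithin_iff.2 ⟨?_, ?_⟩
    · exact ((continuous_sub_left Real.pi).tendsto' 0 _ (sub_zero _)).mono_left nhdsWithin_le_nhds
    · exact eventually_mem_nhdsWithin.mono fun x hx ↦ sub_lt_self Real.pi (mem_Ioi.1 hx)
  have hg : LocAC (Ioo 0 (Real.pi / 2)) (fun x ↦ f (Real.pi - x)) (fun x ↦ -f' (Real.pi - x)) := by
    simpa only [preimage_const_sub_Ioo, sub_self, sub_half] using hf.comp_sub_left Real.pi
  have hhalf := hg.lintegral_hardy_sin_left_half (hfπ.comp hreflect) hp hα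
  have hint (k : ℝ → ℝ) (r : ℝ) :
      ∫⁻ x in Ioo 0 (Real.pi / 2), ENNReal.ofReal (|k (Real.pi - x)| ^ p * (Real.sin x ^ r)⁻¹) =
        ∫⁻ x in Ioo (Real.pi / 2) Real.pi, ENNReal.ofReal (|k x| ^ p * (Real.sin x ^ r)⁻¹) := by
    simpa only [Real.sin_pi_sub, sub_zero, sub_half] using setLIntegral_Ioo_comp_sub_left
      (fun x ↦ ENNReal.ofReal (|k x| ^ p * (Real.sin x ^ r)⁻¹)) 0 (Real.pi / 2) Real.pi
  simpa only [abs_neg, hint] using hhalf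

end LocAC

theorem hardy_vanishing_boundary_general {h h' : ℝ → ℝ} {p α : ℝ} (hp : 1 ≤ p) (hα : 0 < α)
    (hh : LocAC (Ioo 0 Real.pi) h h') (h₀ : Tendsto h (𝓝[>] 0) (𝓝 0))
    (hπ : Tendsto h (𝓝[<] Real.pi) (𝓝 0)) :
    ∫⁻ θ in Ioo 0 Real.pi, ENNReal.ofReal (|h θ| ^ p * (Real.sin θ ^ (p + α))⁻¹) ≤
      ENNReal.ofReal ((Real.pi / 2) ^ (p + α) / α) *
        ∫⁻ θ in Ioo 0 Real.pi, ENNReal.ofReal (|h' θ| ^ p * (Real.sin θ ^ α)⁻¹) := by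
  have hpos : 0 < Real.pi / 2 := by positivity
  have hlt : Real.pi / 2 < Real.pi := half_lt_self Real.pi_pos
  have hsplit (F : ℝ → ℝ≥0∞) : ∫⁻ θ in Ioo 0 Real.pi, F θ =
      (∫⁻ θ in Ioo 0 (Real.pi / 2), F θ) + ∫⁻ θ in Ioo (Real.pi / 2) Real.pi, F θ := by
    rw [← Ioc_union_Ioo_eq_Ioo hpos.le hlt, lintegral_union measurableSet_Ioo
      (disjoint_left.2 fun _ hl hr ↦ hl.2.not_gt hr.1), ← restrict_Ioo_eq_restrict_Ioc (a := 0)]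
  rw [hsplit, hsplit, mul_add]
  exact add_le_add
    ((hh.mono (Ioo_subset_Ioo_right hlt.le)).lintegral_hardy_sin_left_half h₀ hp hα)
    ((hh.mono (Ioo_subset_Ioo_left hpos.le)).lintegral_hardy_sin_right_half hπ hp hα)

/-- The intermediate Hardy-type inequality (eli2.6): if `h : [0,π] → ℝ` is continuous with
`h(0) = h(π) = 0` and locally absolutely continuous on `(0,π)` with a.e. derivative `h'`,
then `∫ h² (sin θ)⁻³ ≤ C ( ∫ (h')² (sin θ)⁻¹ + ∫ h² (sin θ)⁻¹ )`. -/
theorem hardy_vanishing_boundary :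
    ∃ C : ℝ, 0 < C ∧
      ∀ h h' : ℝ → ℝ,
        ContinuousOn h (Set.Icc 0 Real.pi) →
        h 0 = 0 → h Real.pi = 0 →
        LocAC (Set.Ioo 0 Real.pi) h h' →
        (∫⁻ θ in Set.Ioo 0 Real.pi,
            ENNReal.ofReal ((h θ) ^ 2 * ((Real.sin θ) ^ 3)⁻¹)) ≤
          ENNReal.ofReal C *
            ((∫⁻ θ in Set.Ioo 0 Real.pi,
                ENNReal.ofReal ((h' θ) ^ 2 * (Real.sin θ)⁻¹)) +
             (∫⁻ θ in Set.Ioo 0 Real.pi,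
                ENNReal.ofReal ((h θ) ^ 2 * (Real.sin θ)⁻¹))) := by
  refine ⟨(Real.pi / 2) ^ 3, by positivity, fun h h' hcont h₀ hπ hh ↦ ?_⟩
  have hleft := h₀ ▸ tendsto_nhdsGT_of_continuousOn_Icc hcont Real.pi_pos
  have hright := hπ ▸ tendsto_nhdsLT_of_continuousOn_Icc hcont Real.pi_pos
  refine le_trans ?_ (mul_le_mul_right le_self_add _)
  simpa [show (2 + 1 : ℝ) = 3 by norm_num] using
    hardy_vanishing_boundary_general one_le_two one_pos hh hleft hright
end

section
/- Let r, θ, a, M, c be real numbers with sin θ ≠ 0, q² := r² + a² (cos θ)² ≠ 0, Δ := r² + a² − 2Mr ≠ 0, and set p := 2Mr/q² and Σ² := (r² + a²)² − a² (sin θ)² Δ. Consider the symmetric 3×3 matrix G with entries G₁₁ = (q²/Δ)(1 − c²) + (p + 1)c², G₁₂ = p c, G₁₃ = −a (sin θ)² (p + 1) c, G₂₂ = p − 1, G₂₃ = −a (sin θ)² p, G₃₃ = q² (sin θ)² + (p + 1) a² (sin θ)⁴. Then det G = −q² (sin θ)², G is invertible, and its inverse is the symmetric matrix H with H₁₁ =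 Δ/q², H₁₂ = p c, H₁₃ = a c / q², H₂₂ = −(p + 1)c² − (q² + (p + 1) a² (sin θ)²)(1 − c²)/Δ, H₂₃ = −a p (1 − c²)/Δ, H₃₃ = (Δ − a² (sin θ)² (1 − c²))/(q² Δ (sin θ)²). -/
/-!
Passing from Boyer–Lindquist coordinates `(r, t, φ)` to `(r, t₊, φ₊)` gives
`dt = dt₊ - k dr` and `dφ = dφ₊ - h dr` with `k = c p q² / Δ` and `h = c a / Δ`. The block is
therefore congruent, by a unipotent shear, to the Boyer–Lindquist block. The latter splits into
the entry `q² / Δ` and a `2 × 2` block in `(t, φ)` whose determinant is `-Δ sin² θ`, because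
`Δ = q² (1 - p) + a² sin² θ`. The determinant is unchanged by the shear, and the inverse is the
sheared inverse of the Boyer–Lindquist block.
-/

open Matrix

section Congruence

variable {n R : Type*} [Fintype n] [DecidableEq n] [CommRing R] {P Q B C : Matrix n n R}

theorem det_transpose_mul_mul_of_det_eq_one (hP : P.det = 1) (B : Matrix n n R) :
    (Pᵀ * B * P).det = B.det := by
  rw [det_mul, det_mul, det_transpose, hP, one_mul, mul_one]

theorem transpose_mul_mul_mul_eq_one (hPQ : P * Q = 1) (hBC : B * C = 1) :
    (Pᵀ * B * P) * (Q * C * Qᵀ) = 1 := by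
  have hPQt : Pᵀ * Qᵀ = 1 := by
    rw [← transpose_mul, mul_eq_one_comm.mp hPQ, transpose_one]
  calc
    (Pᵀ * B * P) * (Q * C * Qᵀ) = Pᵀ * (B * (P * Q) * C) * Qᵀ := by
      simp only [Matrix.mul_assoc]
    _ = 1 := by rw [hPQ, Matrix.mul_one, hBC, Matrix.mul_one, hPQt]

end Congruence

section Shear

variable {R : Type*} [CommRing R]

/-- The Jacobian `∂(r, t, φ) / ∂(r, t₊, φ₊)` of a change of coordinates with
`dt = dt₊ - k dr` and `dφ = dφ₊ - h dr`. -/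
def radialShear (k h : R) : Matrix (Fin 3) (Fin 3) R :=
  !![1, 0, 0; -k, 1, 0; -h, 0, 1]

theorem det_radialShear (k h : R) : (radialShear k h).det = 1 := by
  simp [radialShear, det_fin_three]

theorem radialShear_mul_radialShear_neg (k h : R) :
    radialShear k h * radialShear (-k) (-h) = 1 := by
  simp [radialShear, one_fin_three]

/-- The shape of a metric block in which `r` is orthogonal to `t` and `φ`, with radial entry `g`
and `(t, φ)`-block `!![x, y; y, z]`. -/
def radialSplit (g x y z : R) : Matrix (Fin 3) (Fin 3) R :=
  !![g, 0, 0; 0, x, y; 0, y, z]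

theorem det_radialSplit (g x y z : R) :
    (radialSplit g x y z).det = g * (x * z - y ^ 2) := by
  simp only [radialSplit, det_fin_three, of_apply, cons_val]
  ring

theorem radialShear_transpose_mul_radialSplit_mul (k h g x y z : R) :
    (radialShear k h)ᵀ * radialSplit g x y z * radialShear k h =
      !![g - k * -(k * x + h * y) - h * -(k * y + h * z), -(k * x + h * y), -(k * y + h * z);
        -(k * x + h * y), x, y;
        -(k * y + h * z), y, z] := by
  ext i j
  fin_cases i <;> fin_cases j <;>
    simp only [radialShear, radialSplit, mul_apply, Fin.sum_univ_three, Fin.zero_eta, Fin.mk_one,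
      Fin.reduceFinMk, transpose_apply, of_apply, cons_val] <;>
    ring

theorem radialShear_mul_radialSplit_mul_transpose (k h g x y z : R) :
    radialShear k h * radialSplit g x y z * (radialShear k h)ᵀ =
      !![g, -(g * k), -(g * h);
        -(g * k), x + g * k ^ 2, y + g * k * h;
        -(g * h), y + g * k * h, z + g * h ^ 2] := by
  ext i j
  fin_cases i <;> fin_cases j <;>
    simp only [radialShear, radialSplit, mul_apply, Fin.sum_univ_three, Fin.zero_eta, Fin.mk_one,
      Fin.reduceFinMk, transpose_apply, of_apply, cons_val] <;>
    ring

theorem radialSplit_mul_inv {K : Type*} [Field K] {g x y z d : K} (hg : g ≠ 0) (hd : d ≠ 0)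
    (hdet : x * z - y ^ 2 = d) :
    radialSplit g x y z * radialSplit g⁻¹ (z / d) (-y / d) (x / d) = 1 := by
  have h_tt : x * (z / d) + y * (-y / d) = 1 := by
    field_simp
    linear_combination hdet
  have h_tφ : x * (-y / d) + y * (x / d) = 0 := by ring
  have h_φt : y * (z / d) + z * (-y / d) = 0 := by ring
  have h_φφ : y * (-y / d) + z * (x / d) = 1 := by
    field_simp
    linear_combination hdet
  simp [radialSplit, one_fin_three, hg, h_tt, h_tφ, h_φt, h_φφ]

end Shear

section Kerr

variable {K : Type*} [Field K]

/-- The `(r, t₊, φ₊)`-block of the Kerr metric with cutoff value `c`; `s` stands for `sin θ`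
and `q2` for `q²`. -/
def kerrBlock (s a c Δ q2 p : K) : Matrix (Fin 3) (Fin 3) K :=
  !![q2 / Δ * (1 - c ^ 2) + (p + 1) * c ^ 2, p * c, -a * s ^ 2 * (p + 1) * c;
    p * c, p - 1, -a * s ^ 2 * p;
    -a * s ^ 2 * (p + 1) * c, -a * s ^ 2 * p, q2 * s ^ 2 + (p + 1) * a ^ 2 * s ^ 4]

/-- The block of inverse metric components matching `kerrBlock`, in the same variables. -/
def kerrInverseBlock (s a c Δ q2 p : K) : Matrix (Fin 3) (Fin 3) K :=
  !![Δ / q2, p * c, a * c / q2;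
    p * c, -(p + 1) * c ^ 2 - (q2 + (p + 1) * a ^ 2 * s ^ 2) * (1 - c ^ 2) / Δ,
      -a * p * (1 - c ^ 2) / Δ;
    a * c / q2, -a * p * (1 - c ^ 2) / Δ,
      (Δ - a ^ 2 * s ^ 2 * (1 - c ^ 2)) / (q2 * Δ * s ^ 2)]

/-- The `(r, t, φ)`-block of the Kerr metric in Boyer–Lindquist coordinates, in the variables
of `kerrBlock`. -/
def boyerLindquistBlock (s a Δ q2 p : K) : Matrix (Fin 3) (Fin 3) K :=
  radialSplit (q2 / Δ) (p - 1) (-a * s ^ 2 * p) (q2 * s ^ 2 + (p + 1) * a ^ 2 * s ^ 4)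

/-- The `(r, t, φ)`-block of the inverse Kerr metric in Boyer–Lindquist coordinates, in the
variables of `kerrBlock`. -/
def boyerLindquistInverseBlock (s a Δ q2 p : K) : Matrix (Fin 3) (Fin 3) K :=
  radialSplit (Δ / q2) (-(q2 + (p + 1) * a ^ 2 * s ^ 2) / Δ) (-a * p / Δ) ((1 - p) / (Δ * s ^ 2))

/-- The Jacobian from the regularized coordinates to Boyer–Lindquist coordinates, where
`dt = dt₊ - (c p q² / Δ) dr` and `dφ = dφ₊ - (c a / Δ) dr`. -/
def kerrShear (a c Δ q2 p : K) : Matrix (Fin 3) (Fin 3) K :=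
  radialShear (c * p * q2 / Δ) (c * a / Δ)

variable {s a c Δ q2 p : K}

theorem det_kerrShear : (kerrShear a c Δ q2 p).det = 1 :=
  det_radialShear _ _

theorem kerrShear_mul_kerrShear_neg :
    kerrShear a c Δ q2 p * kerrShear a (-c) Δ q2 p = 1 := by
  simpa only [kerrShear, neg_mul, neg_div] using
    radialShear_mul_radialShear_neg (c * p * q2 / Δ) (c * a / Δ)

theorem boyerLindquist_time_angle_det (hΔ : Δ = q2 * (1 - p) + a ^ 2 * s ^ 2) :
    (p - 1) * (q2 * s ^ 2 + (p + 1) * a ^ 2 * s ^ 4) - (-a * s ^ 2 * p) ^ 2 = -Δ * s ^ 2 := by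
  rw [hΔ]
  ring

theorem det_boyerLindquistBlock (hΔ : Δ = q2 * (1 - p) + a ^ 2 * s ^ 2) (hΔ0 : Δ ≠ 0) :
    (boyerLindquistBlock s a Δ q2 p).det = -q2 * s ^ 2 := by
  rw [boyerLindquistBlock, det_radialSplit, boyerLindquist_time_angle_det hΔ]
  field_simp

theorem boyerLindquistBlock_mul_inverseBlock (hΔ : Δ = q2 * (1 - p) + a ^ 2 * s ^ 2)
    (hs : s ≠ 0) (hq0 : q2 ≠ 0) (hΔ0 : Δ ≠ 0) :
    boyerLindquistBlock s a Δ q2 p * boyerLindquistInverseBlock s a Δ q2 p = 1 := by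
  have hd : -Δ * s ^ 2 ≠ 0 := mul_ne_zero (neg_ne_zero.mpr hΔ0) (pow_ne_zero 2 hs)
  have h_rr : Δ / q2 = (q2 / Δ)⁻¹ := (inv_div q2 Δ).symm
  have h_tt : -(q2 + (p + 1) * a ^ 2 * s ^ 2) / Δ =
      (q2 * s ^ 2 + (p + 1) * a ^ 2 * s ^ 4) / (-Δ * s ^ 2) := by
    field_simp
  have h_tφ : -a * p / Δ = -(-a * s ^ 2 * p) / (-Δ * s ^ 2) := by
    field_simp
  have h_φφ : (1 - p) / (Δ * s ^ 2) = (p - 1) / (-Δ * s ^ 2) := by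
    rw [neg_mul, div_neg, ← neg_div, neg_sub]
  rw [boyerLindquistBlock, boyerLindquistInverseBlock, h_rr, h_tt, h_tφ, h_φφ]
  exact radialSplit_mul_inv (div_ne_zero hq0 hΔ0) hd (boyerLindquist_time_angle_det hΔ)

theorem kerrBlock_eq_shear (hΔ : Δ = q2 * (1 - p) + a ^ 2 * s ^ 2) (hΔ0 : Δ ≠ 0) :
    kerrBlock s a c Δ q2 p =
      (kerrShear a c Δ q2 p)ᵀ * boyerLindquistBlock s a Δ q2 p * kerrShear a c Δ q2 p := by
  have h_rt : p * c = -(c * p * q2 / Δ * (p - 1) + c * a / Δ * (-a * s ^ 2 * p)) := by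
    field_simp
    rw [hΔ]
    ring
  have h_rφ : -a * s ^ 2 * (p + 1) * c = -(c * p * q2 / Δ * (-a * s ^ 2 * p) +
      c * a / Δ * (q2 * s ^ 2 + (p + 1) * a ^ 2 * s ^ 4)) := by
    field_simp
    rw [hΔ]
    ring
  have h_rr : q2 / Δ * (1 - c ^ 2) + (p + 1) * c ^ 2 =
      q2 / Δ - c * p * q2 / Δ * (p * c) - c * a / Δ * (-a * s ^ 2 * (p + 1) * c) := by
    field_simp
    rw [hΔ]
    ring
  rw [kerrShear, boyerLindquistBlock, radialShear_transpose_mul_radialSplit_mul, kerrBlock,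
    ← h_rt, ← h_rφ, h_rr]

theorem kerrInverseBlock_eq_shear (hΔ : Δ = q2 * (1 - p) + a ^ 2 * s ^ 2)
    (hs : s ≠ 0) (hq0 : q2 ≠ 0) (hΔ0 : Δ ≠ 0) :
    kerrInverseBlock s a c Δ q2 p = kerrShear a (-c) Δ q2 p *
      boyerLindquistInverseBlock s a Δ q2 p * (kerrShear a (-c) Δ q2 p)ᵀ := by
  have h_tt : -(p + 1) * c ^ 2 - (q2 + (p + 1) * a ^ 2 * s ^ 2) * (1 - c ^ 2) / Δ =
      -(q2 + (p + 1) * a ^ 2 * s ^ 2) / Δ + Δ / q2 * (-c * p * q2 / Δ) ^ 2 := by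
    field_simp
    rw [hΔ]
    ring
  have h_tφ : -a * p * (1 - c ^ 2) / Δ =
      -a * p / Δ + Δ / q2 * (-c * p * q2 / Δ) * (-c * a / Δ) := by
    field_simp
    ring
  have h_φφ : (Δ - a ^ 2 * s ^ 2 * (1 - c ^ 2)) / (q2 * Δ * s ^ 2) =
      (1 - p) / (Δ * s ^ 2) + Δ / q2 * (-c * a / Δ) ^ 2 := by
    field_simp
    rw [hΔ]
    ring
  have h_rt : p * c = -(Δ / q2 * (-c * p * q2 / Δ)) := by
    field_simp
  have h_rφ : a * c / q2 = -(Δ / q2 * (-c * a / Δ)) := by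
    field_simp
  rw [kerrShear, boyerLindquistInverseBlock, radialShear_mul_radialSplit_mul_transpose,
    kerrInverseBlock, h_tt, h_tφ, h_φφ, h_rt, h_rφ]

theorem kerr_block_inverse_general (hΔ : Δ = q2 * (1 - p) + a ^ 2 * s ^ 2)
    (hs : s ≠ 0) (hq0 : q2 ≠ 0) (hΔ0 : Δ ≠ 0) :
    (kerrBlock s a c Δ q2 p).det = -q2 * s ^ 2 ∧
      kerrBlock s a c Δ q2 p * kerrInverseBlock s a c Δ q2 p = 1 ∧
      kerrInverseBlock s a c Δ q2 p * kerrBlock s a c Δ q2 p = 1 := by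
  have hdet : (kerrBlock s a c Δ q2 p).det = -q2 * s ^ 2 := by
    rw [kerrBlock_eq_shear hΔ hΔ0, det_transpose_mul_mul_of_det_eq_one det_kerrShear,
      det_boyerLindquistBlock hΔ hΔ0]
  have hmul : kerrBlock s a c Δ q2 p * kerrInverseBlock s a c Δ q2 p = 1 := by
    rw [kerrBlock_eq_shear hΔ hΔ0, kerrInverseBlock_eq_shear hΔ hs hq0 hΔ0]
    exact transpose_mul_mul_mul_eq_one kerrShear_mul_kerrShear_neg
      (boyerLindquistBlock_mul_inverseBlock hΔ hs hq0 hΔ0)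
  exact ⟨hdet, hmul, mul_eq_one_comm.mp hmul⟩

end Kerr

theorem kerr_delta_eq {r θ a M Δ q2 p : ℝ} (hq : q2 = r ^ 2 + a ^ 2 * Real.cos θ ^ 2)
    (hq0 : q2 ≠ 0) (hΔ : Δ = r ^ 2 + a ^ 2 - 2 * M * r) (hp : p = 2 * M * r / q2) :
    Δ = q2 * (1 - p) + a ^ 2 * Real.sin θ ^ 2 := by
  have hpq : p * q2 = 2 * M * r := (eq_div_iff hq0).mp hp
  linear_combination hΔ - hq + hpq - a ^ 2 * Real.sin_sq_add_cos_sq θ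

/-- The `(r, t₊, φ₊)`-block of the Kerr metric in regularized coordinates (exp1), with the
cutoff value `χ(r)` replaced by a parameter `c`, has determinant `−q² sin²θ` and explicit
inverse given by the components of (exp2.1). -/
theorem kerr_block_inverse (r θ a M c Δ q2 Sig2 p : ℝ)
    (hsin : Real.sin θ ≠ 0)
    (hq : q2 = r ^ 2 + a ^ 2 * (Real.cos θ) ^ 2)
    (hq0 : q2 ≠ 0)
    (hΔ : Δ = r ^ 2 + a ^ 2 - 2 * M * r)
    (hΔ0 : Δ ≠ 0)
    (hp : p = 2 * M * r / q2)
    (hSig : Sig2 = (r ^ 2 + a ^ 2) ^ 2 - a ^ 2 * (Real.sin θ) ^ 2 * Δ)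
    (G H : Matrix (Fin 3) (Fin 3) ℝ)
    (hG : G = !![q2 / Δ * (1 - c ^ 2) + (p + 1) * c ^ 2,
                 p * c,
                 -a * (Real.sin θ) ^ 2 * (p + 1) * c;
                 p * c,
                 p - 1,
                 -a * (Real.sin θ) ^ 2 * p;
                 -a * (Real.sin θ) ^ 2 * (p + 1) * c,
                 -a * (Real.sin θ) ^ 2 * p,
                 q2 * (Real.sin θ) ^ 2 + (p + 1) * a ^ 2 * (Real.sin θ) ^ 4])
    (hH : H = !![Δ / q2,
                 p * c,
                 a * c / q2;
                 p * c,
                 -(p + 1) * c ^ 2 - (q2 + (p + 1) * a ^ 2 * (Real.sin θ) ^ 2) * (1 - c ^ 2) / Δ,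
                 -a * p * (1 - c ^ 2) / Δ;
                 a * c / q2,
                 -a * p * (1 - c ^ 2) / Δ,
                 (Δ - a ^ 2 * (Real.sin θ) ^ 2 * (1 - c ^ 2)) / (q2 * Δ * (Real.sin θ) ^ 2)]) :
    G.det = -q2 * (Real.sin θ) ^ 2 ∧ G * H = 1 ∧ H * G = 1 := by
  subst hG hH
  exact kerr_block_inverse_general (kerr_delta_eq hq hq0 hΔ hp) hsin hq0 hΔ0
end

section
/- There exists ε̄ ∈ (0, 1] such that for every M > 0 and every a ∈ [0, ε̄ M], the polynomial equation r³ − 3Mr² + a²r + Ma² = 0 has exactly one solution r* in the interval (M, ∞), and this solution satisfies 3M − a²/M ≤ r* ≤ 3M. -/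
/-!
In the variable `s = r - M` the equation becomes the depressed cubic
`s ^ 3 = (3 * M ^ 2 - a ^ 2) * s + 2 * M * (M ^ 2 - a ^ 2)`, whose coefficients on the right are
positive and nonnegative as soon as `|a| ≤ M`. A positive root of `s ^ 3 = p * s + q` with `0 ≤ q`
satisfies `p ≤ s ^ 2`, and this forces it to be the only one. Here it also gives `M ≤ s`, that is
`2 * M ≤ r`; the bounds on `r` are then read off from `r ^ 2 * (3 * M - r) = a ^ 2 * (r + M)`.
-/

section DepressedCubic

variable {R : Type*} [CommRing R] [LinearOrder R] [IsStrictOrderedRing R] {p q x y : R}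

theorem le_sq_of_cube_eq_mul_add (hq : 0 ≤ q) (hx : 0 < x) (h : x ^ 3 = p * x + q) : p ≤ x ^ 2 := by
  refine le_of_mul_le_mul_right ?_ hx
  calc p * x ≤ p * x + q := le_add_of_nonneg_right hq
    _ = x ^ 2 * x := by rw [← h, pow_succ]

theorem eq_of_cube_eq_mul_add (hq : 0 ≤ q) (hx : 0 < x) (hy : 0 < y)
    (hxq : x ^ 3 = p * x + q) (hyq : y ^ 3 = p * y + q) : x = y := by
  have factored : (x - y) * (x ^ 2 + x * y + y ^ 2 - p) = 0 := by
    linear_combination hxq - hyq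
  have cofactor_pos : 0 < x ^ 2 + x * y + y ^ 2 - p := by
    linarith [le_sq_of_cube_eq_mul_add hq hx hxq, mul_pos hx hy, pow_pos hy 2]
  exact sub_eq_zero.mp ((mul_eq_zero.mp factored).resolve_right cofactor_pos.ne')

theorem exists_pos_cube_eq_mul_add {p q : ℝ} (hp : 0 < p) (hq : 0 ≤ q) :
    ∃ x : ℝ, 0 < x ∧ x ^ 3 = p * x + q := by
  set u := p + q + 1 with hu
  have one_le_u : 1 ≤ u := by linarith [hu]
  have u_le_sq : u ≤ u ^ 2 := le_self_pow₀ one_le_u two_ne_zero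
  have sqrt_le_u : √p ≤ u := (Real.sqrt_le_left (by linarith)).mpr (by linarith)
  have value_sqrt : √p ^ 3 - p * √p = 0 := by
    rw [pow_succ, Real.sq_sqrt hp.le, sub_self]
  have le_value_u : q ≤ u ^ 3 - p * u :=
    calc q ≤ u ^ 2 - p := by linarith
      _ ≤ u * (u ^ 2 - p) := le_mul_of_one_le_left (by linarith) one_le_u
      _ = u ^ 3 - p * u := by ring
  have continuous_value : ContinuousOn (fun x : ℝ ↦ x ^ 3 - p * x) (Set.Icc √p u) := by fun_prop
  obtain ⟨x, hx, hxq⟩ := intermediate_value_Icc sqrt_le_u continuous_value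
    ⟨value_sqrt.trans_le hq, le_value_u⟩
  exact ⟨x, (Real.sqrt_pos.mpr hp).trans_le hx.1, sub_eq_iff_eq_add'.mp hxq⟩

theorem existsUnique_pos_cube_eq_mul_add {p q : ℝ} (hp : 0 < p) (hq : 0 ≤ q) :
    ∃! x : ℝ, 0 < x ∧ x ^ 3 = p * x + q := by
  obtain ⟨x, hx, hxq⟩ := exists_pos_cube_eq_mul_add hp hq
  exact ⟨x, ⟨hx, hxq⟩, fun y ⟨hy, hyq⟩ ↦ eq_of_cube_eq_mul_add hq hy hx hyq hxq⟩

end DepressedCubic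

/-- The cubic polynomial in `r` whose root in `(M, ∞)` is the radius of the axially symmetric
trapped null geodesics of the Kerr spacetime with mass `M` and angular momentum parameter `a`. -/
def trappingCubic {R : Type*} [CommRing R] (M a r : R) : R :=
  r ^ 3 - 3 * M * r ^ 2 + a ^ 2 * r + M * a ^ 2

namespace trappingCubic

theorem eq_zero_iff_depressed {R : Type*} [CommRing R] {M a r : R} :
    trappingCubic M a r = 0 ↔
      (r - M) ^ 3 = (3 * M ^ 2 - a ^ 2) * (r - M) + 2 * M * (M ^ 2 - a ^ 2) := by
  rw [← sub_eq_zero (a := (r - M) ^ 3), trappingCubic]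
  ring_nf

theorem eq_zero_iff_factored {R : Type*} [CommRing R] {M a r : R} :
    trappingCubic M a r = 0 ↔ r ^ 2 * (3 * M - r) = a ^ 2 * (r + M) := by
  rw [eq_comm (a := r ^ 2 * _), ← sub_eq_zero (a := a ^ 2 * _), trappingCubic]
  ring_nf

section Bounds

variable {R : Type*} [CommRing R] [LinearOrder R] [IsStrictOrderedRing R] {M a r : R}

theorem le_three_mul (hM : 0 ≤ M) (hr : 0 < r) (h : trappingCubic M a r = 0) : r ≤ 3 * M := by
  have product_nonneg : 0 ≤ r ^ 2 * (3 * M - r) := by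
    rw [eq_zero_iff_factored.mp h]
    positivity
  exact sub_nonneg.mp (nonneg_of_mul_nonneg_right product_nonneg (pow_pos hr 2))

theorem depressed_constant_nonneg (ha : |a| ≤ M) : 0 ≤ 2 * M * (M ^ 2 - a ^ 2) := by
  have hM : 0 ≤ M := (abs_nonneg a).trans ha
  exact mul_nonneg (by positivity) (sub_nonneg.mpr (sq_le_sq.mpr (ha.trans (le_abs_self M))))

theorem two_mul_le (ha : |a| ≤ M) (hr : M < r) (h : trappingCubic M a r = 0) : 2 * M ≤ r := by
  have ha_sq : a ^ 2 ≤ M ^ 2 := sq_le_sq.mpr (ha.trans (le_abs_self M))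
  have le_shift_sq : 3 * M ^ 2 - a ^ 2 ≤ (r - M) ^ 2 :=
    le_sq_of_cube_eq_mul_add (depressed_constant_nonneg ha) (sub_pos.mpr hr)
      (eq_zero_iff_depressed.mp h)
  have le_shift : M ≤ r - M :=
    le_of_sq_le_sq (by linarith [sq_nonneg M]) (sub_pos.mpr hr).le
  linarith

theorem three_mul_sub_le {K : Type*} [Field K] [LinearOrder K] [IsStrictOrderedRing K] {M a r : K}
    (hM : 0 < M) (hr : 2 * M ≤ r) (h : trappingCubic M a r = 0) : 3 * M - a ^ 2 / M ≤ r := by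
  have hr_pos : 0 < r := by linarith
  have mul_add_le_sq : M * (r + M) ≤ r ^ 2 := by nlinarith
  rw [sub_le_comm, le_div_iff₀ hM]
  refine le_of_mul_le_mul_left ?_ (pow_pos hr_pos 2)
  calc r ^ 2 * ((3 * M - r) * M) = a ^ 2 * (M * (r + M)) := by
        linear_combination M * eq_zero_iff_factored.mp h
    _ ≤ a ^ 2 * r ^ 2 := mul_le_mul_of_nonneg_left mul_add_le_sq (sq_nonneg a)
    _ = r ^ 2 * a ^ 2 := mul_comm _ _

end Bounds

theorem existsUnique_root {M a : ℝ} (hM : 0 < M) (ha : |a| ≤ M) :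
    ∃! r : ℝ, r ∈ Set.Ioi M ∧ trappingCubic M a r = 0 := by
  have ha_sq : a ^ 2 ≤ M ^ 2 := sq_le_sq.mpr (ha.trans (le_abs_self M))
  have linear_pos : 0 < 3 * M ^ 2 - a ^ 2 := by linarith [pow_pos hM 2]
  refine ((Equiv.subRight M).existsUnique_congr fun r ↦ ?_).mpr
    (existsUnique_pos_cube_eq_mul_add linear_pos (depressed_constant_nonneg ha))
  rw [Set.mem_Ioi, Equiv.subRight_apply, sub_pos, eq_zero_iff_depressed]

end trappingCubic

theorem trapped_set_radius_general {M a : ℝ} (hM : 0 < M) (ha : |a| ≤ M) :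
    (∃! r : ℝ, r ∈ Set.Ioi M ∧ trappingCubic M a r = 0) ∧
      ∀ r : ℝ, r ∈ Set.Ioi M → trappingCubic M a r = 0 →
        3 * M - a ^ 2 / M ≤ r ∧ r ≤ 3 * M :=
  ⟨trappingCubic.existsUnique_root hM ha, fun _ hr h ↦
    ⟨trappingCubic.three_mul_sub_le hM (trappingCubic.two_mul_le ha hr h) h,
      trappingCubic.le_three_mul hM.le (hM.trans hr) h⟩⟩

/-- For `a/M` small, the polynomial equation `r³ − 3Mr² + a²r + Ma² = 0` governing the
trapped set has a unique root `r*` in `(M, ∞)`, and `r* ∈ [3M − a²/M, 3M]`. -/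
theorem trapped_set_radius :
    ∃ ε : ℝ, ε ∈ Set.Ioc (0 : ℝ) 1 ∧
      ∀ M a : ℝ, 0 < M → a ∈ Set.Icc 0 (ε * M) →
        (∃! r : ℝ, r ∈ Set.Ioi M ∧
          r ^ 3 - 3 * M * r ^ 2 + a ^ 2 * r + M * a ^ 2 = 0) ∧
        ∀ r : ℝ, r ∈ Set.Ioi M →
          r ^ 3 - 3 * M * r ^ 2 + a ^ 2 * r + M * a ^ 2 = 0 →
          3 * M - a ^ 2 / M ≤ r ∧ r ≤ 3 * M :=
  ⟨1, ⟨one_pos, le_rfl⟩, fun M _ hM ha ↦ trapped_set_radius_general hM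
    ((abs_of_nonneg ha.1).trans_le (ha.2.trans_eq (one_mul M)))⟩
end

section
/- There exist ε̄ ∈ (0, 1] and C > 0 such that the following holds. Let M > 0 and a ∈ [0, ε̄ M], and let r* be the unique solution in (M, ∞) of r³ − 3Mr² + a²r + Ma² = 0. Then for every r ≥ M one has | r³ − 3Mr² + a²r + Ma² − (r − r*) r² | ≤ C (a²/M) r |r − r*|. -/
/-!
Dividing the cubic by `r - r*` gives the cofactor `r² - (3M - r*) r - M a² / r*`, so the error term
is `-((3M - r*) r + M a² / r*) (r - r*)`. The root equation in the form
`r*² (3M - r*) = a² (r* + M)` shows `0 ≤ 3M - r* ≤ 2a²/M`, and `M² ≤ r r*` bounds the remaining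
coefficient `M a² / r*` by `(a²/M) r`; hence the constant `3`.
-/

/-- The cubic `r³ - 3Mr² + a²r + Ma²`, whose root beyond `M` is the radius of the trapped set for
axially symmetric waves on the Kerr spacetime of mass `M` and angular momentum parameter `a`. It is
encoded as a function of `r`, with `M` and `a` as parameters. -/
def trappingPoly {R : Type*} [CommRing R] (M a r : R) : R :=
  r ^ 3 - 3 * M * r ^ 2 + a ^ 2 * r + M * a ^ 2

namespace trappingPoly

theorem sq_mul_three_mul_sub_root {R : Type*} [CommRing R] {M a rs : R}
    (hroot : trappingPoly M a rs = 0) :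
    rs ^ 2 * (3 * M - rs) = a ^ 2 * (rs + M) := by
  unfold trappingPoly at hroot
  linear_combination -hroot

theorem eq_sub_root_mul {K : Type*} [Field K] {M a rs : K} (hrs : rs ≠ 0)
    (hroot : trappingPoly M a rs = 0) (r : K) :
    trappingPoly M a r = (r - rs) * (r ^ 2 - (3 * M - rs) * r - M * a ^ 2 / rs) := by
  unfold trappingPoly at hroot ⊢
  field_simp
  linear_combination r * hroot

section LinearOrderedField

variable {K : Type*} [Field K] [LinearOrder K] [IsStrictOrderedRing K] {M a rs r : K}

theorem root_le_three_mul (hM : 0 ≤ M) (hrs : 0 < rs) (hroot : trappingPoly M a rs = 0) :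
    rs ≤ 3 * M := by
  have hprod : 0 ≤ rs ^ 2 * (3 * M - rs) := by
    rw [sq_mul_three_mul_sub_root hroot]
    positivity
  exact sub_nonneg.mp (nonneg_of_mul_nonneg_right hprod (by positivity))

theorem three_mul_sub_root_le (hM : 0 < M) (hrs : M ≤ rs) (hroot : trappingPoly M a rs = 0) :
    3 * M - rs ≤ 2 * (a ^ 2 / M) := by
  have hrs_pos : 0 < rs := hM.trans_le hrs
  have hquad : (rs + M) * M ≤ 2 * rs ^ 2 :=
    calc (rs + M) * M ≤ (rs + rs) * rs := by gcongr
      _ = 2 * rs ^ 2 := by ring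
  refine le_of_mul_le_mul_left ?_ (pow_pos hrs_pos 2)
  calc rs ^ 2 * (3 * M - rs) = a ^ 2 / M * ((rs + M) * M) := by
        rw [sq_mul_three_mul_sub_root hroot]
        field_simp
    _ ≤ a ^ 2 / M * (2 * rs ^ 2) := by gcongr
    _ = rs ^ 2 * (2 * (a ^ 2 / M)) := by ring

end LinearOrderedField

end trappingPoly

theorem mul_sq_div_le_sq_div_mul {K : Type*} [Field K] [LinearOrder K] [IsStrictOrderedRing K]
    {M r s : K} (hM : 0 < M) (hs : M ≤ s) (hr : M ≤ r) (a : K) :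
    M * a ^ 2 / s ≤ a ^ 2 / M * r :=
  calc M * a ^ 2 / s ≤ M * a ^ 2 / M := by gcongr
    _ = a ^ 2 / M * M := by ring
    _ ≤ a ^ 2 / M * r := by gcongr

theorem trapped_polynomial_approx_general {K : Type*} [Field K] [LinearOrder K]
    [IsStrictOrderedRing K] {M a rs r : K} (hM : 0 < M) (hrs : M ≤ rs)
    (hroot : trappingPoly M a rs = 0) (hr : M ≤ r) :
    |trappingPoly M a r - (r - rs) * r ^ 2| ≤ 3 * (a ^ 2 / M) * r * |r - rs| := by
  have hrs_pos : 0 < rs := hM.trans_le hrs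
  have hr_pos : 0 < r := hM.trans_le hr
  have hgap : 0 ≤ 3 * M - rs := sub_nonneg.mpr (trappingPoly.root_le_three_mul hM.le hrs_pos hroot)
  have herror : trappingPoly M a r - (r - rs) * r ^ 2 =
      -(((3 * M - rs) * r + M * a ^ 2 / rs) * (r - rs)) := by
    rw [trappingPoly.eq_sub_root_mul hrs_pos.ne' hroot]
    ring
  calc |trappingPoly M a r - (r - rs) * r ^ 2|
      = ((3 * M - rs) * r + M * a ^ 2 / rs) * |r - rs| := by
        rw [herror, abs_neg, abs_mul, abs_of_nonneg (by positivity)]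
    _ ≤ (2 * (a ^ 2 / M) * r + a ^ 2 / M * r) * |r - rs| := by
        gcongr (?_ * r + ?_) * |r - rs|
        · exact trappingPoly.three_mul_sub_root_le hM hrs hroot
        · exact mul_sq_div_le_sq_div_mul hM hrs hr a
    _ = 3 * (a ^ 2 / M) * r * |r - rs| := by ring

/-- Estimate (moro9): for `a/M` small and `r*` the unique root in `(M, ∞)` of
`r³ − 3Mr² + a²r + Ma² = 0`, one has
`| r³ − 3Mr² + a²r + Ma² − (r − r*) r² | ≤ C (a²/M) r |r − r*|` for all `r ≥ M`. -/
theorem trapped_polynomial_approx :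
    ∃ ε C : ℝ, ε ∈ Set.Ioc (0 : ℝ) 1 ∧ 0 < C ∧
      ∀ M a rs : ℝ, 0 < M → a ∈ Set.Icc 0 (ε * M) →
        rs ∈ Set.Ioi M →
        rs ^ 3 - 3 * M * rs ^ 2 + a ^ 2 * rs + M * a ^ 2 = 0 →
        ∀ r : ℝ, M ≤ r →
          |r ^ 3 - 3 * M * r ^ 2 + a ^ 2 * r + M * a ^ 2 - (r - rs) * r ^ 2| ≤
            C * (a ^ 2 / M) * r * |r - rs| := by
  refine ⟨1, 3, by norm_num, by norm_num, fun M a rs hM _ hrs hroot r hr => ?_⟩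
  exact trapped_polynomial_approx_general hM (le_of_lt hrs) hroot hr
end

section
/- For every s ∈ [0, 1] one has ( 33 + s − 12·log(1 + s) − 12·s/(1 + s) ) · (1 + s)² ≥ (3 + s)³. Equivalently, 12 (1 + s)² ( s − log(1 + s) ) + 6 + 16 s − 10 s² − 12 s³ ≥ 0 for s ∈ [0, 1]. -/
/-!
The difference of the two sides of the first inequality is the left-hand side of the second, and
this equals `12 (1 + s)² (s - log (1 + s)) + 2 (1 - s) (1 + 3 s) (3 + 2 s)`. The first summand is
nonnegative since `log (1 + s) ≤ s`, the second because its three linear factors are nonnegative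
on `[-1/3, 1]`.
-/

theorem multiplier_sub_cube_eq {K : Type*} [Field K] {s : K} (hs : 1 + s ≠ 0) (L : K) :
    (33 + s - 12 * L - 12 * s / (1 + s)) * (1 + s) ^ 2 - (3 + s) ^ 3 =
      12 * (1 + s) ^ 2 * (s - L) + 6 + 16 * s - 10 * s ^ 2 - 12 * s ^ 3 := by
  field_simp
  ring

theorem multiplier_cubic_nonneg {K : Type*} [Field K] [LinearOrder K] [IsStrictOrderedRing K]
    {s : K} (hs : s ∈ Set.Icc (-1 / 3) 1) :
    0 ≤ 6 + 16 * s - 10 * s ^ 2 - 12 * s ^ 3 := by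
  obtain ⟨hs_lower, hs_upper⟩ := hs
  have h_one_sub : 0 ≤ 1 - s := by linarith
  have h_one_add : 0 ≤ 1 + 3 * s := by linarith
  have h_three_add : 0 ≤ 3 + 2 * s := by linarith
  calc
    0 ≤ 2 * ((1 - s) * (1 + 3 * s) * (3 + 2 * s)) :=
      mul_nonneg zero_le_two (mul_nonneg (mul_nonneg h_one_sub h_one_add) h_three_add)
    _ = 6 + 16 * s - 10 * s ^ 2 - 12 * s ^ 3 := by ring

theorem sub_log_one_add_nonneg {s : ℝ} (hs : -1 < s) : 0 ≤ s - Real.log (1 + s) := by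
  linarith [Real.log_le_sub_one_of_pos (show 0 < 1 + s by linarith)]

theorem multiplier_derivative_lower_bound_general {s : ℝ} (hs : s ∈ Set.Icc (-1 / 3) 1) :
    (33 + s - 12 * Real.log (1 + s) - 12 * s / (1 + s)) * (1 + s) ^ 2 ≥ (3 + s) ^ 3 ∧
      12 * (1 + s) ^ 2 * (s - Real.log (1 + s)) + 6 + 16 * s - 10 * s ^ 2 - 12 * s ^ 3 ≥ 0 := by
  have hs_gt : -1 < s := by linarith [hs.1]
  have h_log : 0 ≤ 12 * (1 + s) ^ 2 * (s - Real.log (1 + s)) :=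
    mul_nonneg (by positivity) (sub_log_one_add_nonneg hs_gt)
  have h_sum :
      12 * (1 + s) ^ 2 * (s - Real.log (1 + s)) + 6 + 16 * s - 10 * s ^ 2 - 12 * s ^ 3 ≥ 0 := by
    linarith [multiplier_cubic_nonneg hs]
  refine ⟨sub_nonneg.mp ?_, h_sum⟩
  rwa [multiplier_sub_cube_eq (by linarith)]

/-- The inequality `ã₁′(s)(1 + s)² ≥ 1` for `s ∈ [0,1]`, in the two equivalent forms
stated in the proof of Lemma 5.3 (clan2). -/
theorem multiplier_derivative_lower_bound :
    ∀ s ∈ Set.Icc (0 : ℝ) 1,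
      (33 + s - 12 * Real.log (1 + s) - 12 * s / (1 + s)) * (1 + s) ^ 2 ≥ (3 + s) ^ 3 ∧
      12 * (1 + s) ^ 2 * (s - Real.log (1 + s)) + 6 + 16 * s - 10 * s ^ 2 - 12 * s ^ 3 ≥ 0 :=
  fun _ hs ↦ multiplier_derivative_lower_bound_general
    (Set.Icc_subset_Icc_left (by norm_num) hs)
end

section
/- There exists a C¹ function b̃ : ℝ → ℝ, vanishing outside the interval [1/10, 1], such that for every s ∈ [1/10, 1] one has b̃′(s) + 9(1 − 10s + 18s²)/(3 + s)⁵ ≥ 0 and |b̃(s)| ≤ (√2/16)·s. -/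
/-!
The multiplier is an eighth of the quartic bump `f²`, `f(s) = (s - 1/10)(1 - s)`, extended by zero;
the extension is `C¹` because `x ↦ (x⁺)²` is. Its derivative `f f' / 4` is positive left of the
midpoint `11/20`, where it absorbs the negative values of `1 - 10s + 18s²` between the roots
`s₁ ≈ 0.13` and `s₂ ≈ 0.42`, and negative right of it, where the quadratic has become positive.
Replacing the weight `(3 + s)⁵` by `3⁵` on the left half and by `4⁵` on the right half reduces the
claim to two cubic inequalities.
-/

open Set

theorem hasDerivAt_posPart_pow (n : ℕ) (x : ℝ) :
    HasDerivAt (fun y : ℝ ↦ y⁺ ^ (n + 2)) ((n + 2) * x⁺ ^ (n + 1)) x := by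
  have deriv_of_ne : ∀ y : ℝ, y ≠ 0 →
      HasDerivAt (fun y : ℝ ↦ y⁺ ^ (n + 2)) ((n + 2) * y⁺ ^ (n + 1)) y := by
    intro y hy
    rcases hy.lt_or_gt with hneg | hpos
    · rw [posPart_of_nonpos hneg.le, zero_pow n.succ_ne_zero, mul_zero]
      refine (hasDerivAt_const y (0 : ℝ)).congr_of_eventuallyEq ?_
      filter_upwards [eventually_lt_nhds hneg] with z hz
      rw [posPart_of_nonpos hz.le, zero_pow (n + 1).succ_ne_zero]
    · have hpow : HasDerivAt (fun y : ℝ ↦ y ^ (n + 2)) ((n + 2) * y ^ (n + 1)) y := by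
        simpa using hasDerivAt_pow (n + 2) y
      rw [posPart_of_nonneg hpos.le]
      refine hpow.congr_of_eventuallyEq ?_
      filter_upwards [eventually_gt_nhds hpos] with z hz
      rw [posPart_of_nonneg hz.le]
  rcases eq_or_ne x 0 with rfl | hx
  · have hcont (k : ℕ) : Continuous fun y : ℝ ↦ y⁺ ^ k := continuous_posPart.pow k
    exact hasDerivAt_of_hasDerivAt_of_ne deriv_of_ne (hcont _).continuousAt
      ((hcont _).const_mul _).continuousAt
  · exact deriv_of_ne x hx

theorem contDiff_posPart_pow_succ (n : ℕ) : ContDiff ℝ n fun x : ℝ ↦ x⁺ ^ (n + 1) := by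
  induction n with
  | zero => exact contDiff_zero.2 (continuous_posPart.pow (0 + 1))
  | succ n ih =>
    push_cast
    rw [contDiff_succ_iff_deriv, funext fun x ↦ (hasDerivAt_posPart_pow n x).deriv]
    exact ⟨fun x ↦ (hasDerivAt_posPart_pow n x).differentiableAt, by simp, contDiff_const.mul ih⟩

/-- The `C¹` bump function equal to `((s - a) * (b - s)) ^ 2` on `[a, b]` and, when `a ≤ b`,
to `0` elsewhere. -/
noncomputable def quarticBump (a b s : ℝ) : ℝ := ((s - a) * (b - s))⁺ ^ 2

section QuarticBump

variable {a b s : ℝ}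

theorem quarticBump_nonneg : 0 ≤ quarticBump a b s := sq_nonneg _

theorem quarticBump_of_mem_Icc (hs : s ∈ Icc a b) :
    quarticBump a b s = ((s - a) * (b - s)) ^ 2 := by
  rw [quarticBump, posPart_of_nonneg (mul_nonneg (sub_nonneg.2 hs.1) (sub_nonneg.2 hs.2))]

theorem quarticBump_of_notMem_Icc (hab : a ≤ b) (hs : s ∉ Icc a b) : quarticBump a b s = 0 := by
  have hprod : (s - a) * (b - s) ≤ 0 := by
    rcases lt_or_ge s a with hsa | has
    · exact mul_nonpos_of_nonpos_of_nonneg (by linarith) (by linarith)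
    · have hbs : b < s := lt_of_not_ge fun hsb ↦ hs ⟨has, hsb⟩
      exact mul_nonpos_of_nonneg_of_nonpos (by linarith) (by linarith)
  rw [quarticBump, posPart_of_nonpos hprod, zero_pow two_ne_zero]

theorem contDiff_quarticBump (a b : ℝ) : ContDiff ℝ 1 (quarticBump a b) :=
  (contDiff_posPart_pow_succ 1).comp (f := fun s ↦ (s - a) * (b - s)) (by fun_prop)

theorem deriv_quarticBump (hs : s ∈ Icc a b) :
    deriv (quarticBump a b) s = 2 * ((s - a) * (b - s) * (a + b - 2 * s)) := by
  have hinner : HasDerivAt (fun s ↦ (s - a) * (b - s)) (a + b - 2 * s) s :=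
    (((hasDerivAt_id' s).sub_const a).mul ((hasDerivAt_id' s).const_sub b)).congr_deriv (by ring)
  have hbump := (hasDerivAt_posPart_pow 0 ((s - a) * (b - s))).comp s hinner
  rw [posPart_of_nonneg (mul_nonneg (sub_nonneg.2 hs.1) (sub_nonneg.2 hs.2))] at hbump
  exact (hbump.congr_deriv (by push_cast; ring)).deriv

theorem quarticBump_le (hs : s ∈ Icc a b) :
    quarticBump a b s ≤ (b - a) ^ 3 / 4 * (s - a) := by
  have hsa : 0 ≤ s - a := sub_nonneg.2 hs.1
  have hbs : 0 ≤ b - s := sub_nonneg.2 hs.2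
  have hamgm : (s - a) * (b - s) ≤ (b - a) ^ 2 / 4 := by
    linarith [sq_nonneg ((s - a) - (b - s))]
  calc quarticBump a b s
      = ((s - a) * (b - s)) * ((b - s) * (s - a)) := by rw [quarticBump_of_mem_Icc hs]; ring
    _ ≤ ((b - a) ^ 2 / 4) * ((b - a) * (s - a)) := by gcongr; exact hs.1
    _ = (b - a) ^ 3 / 4 * (s - a) := by ring

end QuarticBump

-- The factor `27 / 4` is `3⁵ / (4 * 9)`, with `3⁵` the lower bound of the weight `(3 + s)⁵`.
theorem cubic_nonneg_of_tenth_le {s : ℝ} (hs : 1 / 10 ≤ s) :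
    0 ≤ 27 / 4 * ((s - 1 / 10) * (1 - s) * (11 / 10 - 2 * s)) + (1 - 10 * s + 18 * s ^ 2) := by
  have hcubic : 0 ≤ 27 / 2 * ((s - 1 / 10) * (s - 1 / 10 - 1 / 6) ^ 2) :=
    mul_nonneg (by norm_num) (mul_nonneg (sub_nonneg.2 hs) (sq_nonneg _))
  have hquadratic : 0 ≤ 171 / 40 * (s - 1 / 10) ^ 2 - 523 / 400 * (s - 1 / 10) + 9 / 50 := by
    nlinarith [sq_nonneg (s - 1 / 10 - 3 / 20)]
  linarith

-- The factor `256 / 9` is `4⁵ / (4 * 9)`, with `4⁵` the upper bound of the weight.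
theorem cubic_nonneg_of_midpoint_le {s : ℝ} (hs : 11 / 20 ≤ s) :
    0 ≤ 256 / 9 * ((s - 1 / 10) * (1 - s) * (11 / 10 - 2 * s)) + (1 - 10 * s + 18 * s ^ 2) := by
  have hcubic : 0 ≤ 512 / 9 * ((s - 11 / 20) * (1 - s) ^ 2) :=
    mul_nonneg (by norm_num) (mul_nonneg (sub_nonneg.2 hs) (sq_nonneg _))
  have hquadratic : 0 ≤ 346 / 5 * (1 - s) ^ 2 - 1226 / 25 * (1 - s) + 9 := by
    nlinarith [sq_nonneg (1 - s - 7 / 20)]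
  linarith

theorem bump_slope_add_weighted_quadratic_nonneg {s : ℝ} (hs : s ∈ Icc (1 / 10 : ℝ) 1) :
    0 ≤ (s - 1 / 10) * (1 - s) * (11 / 10 - 2 * s) / 4 +
      9 * (1 - 10 * s + 18 * s ^ 2) / (3 + s) ^ 5 := by
  obtain ⟨hs_lower, hs_upper⟩ := hs
  have hweight : 0 < (3 + s) ^ 5 := by positivity
  have hprod : 0 ≤ (s - 1 / 10) * (1 - s) :=
    mul_nonneg (sub_nonneg.2 hs_lower) (sub_nonneg.2 hs_upper)
  rw [add_div' _ _ _ hweight.ne']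
  refine div_nonneg ?_ hweight.le
  rcases le_total s (11 / 20) with hleft | hright
  · have hslope : 0 ≤ (s - 1 / 10) * (1 - s) * (11 / 10 - 2 * s) :=
      mul_nonneg hprod (by linarith)
    have hweight_ge : (3 : ℝ) ^ 5 ≤ (3 + s) ^ 5 := by gcongr; linarith
    linarith [mul_le_mul_of_nonneg_left hweight_ge hslope, cubic_nonneg_of_tenth_le hs_lower]
  · have hslope : (s - 1 / 10) * (1 - s) * (11 / 10 - 2 * s) ≤ 0 :=
      mul_nonpos_of_nonneg_of_nonpos hprod (by linarith)
    have hweight_le : (3 + s) ^ 5 ≤ (4 : ℝ) ^ 5 := by gcongr; linarith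
    linarith [mul_le_mul_of_nonpos_left hweight_le hslope, cubic_nonneg_of_midpoint_le hright]

/-- Existence claim (moro61): there is a `C¹` function `b̃` vanishing outside `[1/10, 1]`
with `b̃′(s) + 9(1 − 10s + 18s²)/(3+s)⁵ ≥ 0` and `|b̃(s)| ≤ (√2/16)s` on `[1/10, 1]`. -/
theorem auxiliary_multiplier_exists :
    ∃ b : ℝ → ℝ, ContDiff ℝ 1 b ∧
      (∀ s : ℝ, s ∉ Set.Icc (1 / 10 : ℝ) 1 → b s = 0) ∧
      ∀ s ∈ Set.Icc (1 / 10 : ℝ) 1,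
        0 ≤ deriv b s + 9 * (1 - 10 * s + 18 * s ^ 2) / (3 + s) ^ 5 ∧
        |b s| ≤ Real.sqrt 2 / 16 * s := by
  refine ⟨fun s ↦ quarticBump (1 / 10) 1 s / 8, (contDiff_quarticBump _ _).div_const 8,
    fun s hs ↦ ?_, fun s hs ↦ ⟨?_, ?_⟩⟩
  · simp only [quarticBump_of_notMem_Icc (by norm_num) hs, zero_div]
  · rw [deriv_div_const, deriv_quarticBump hs]
    convert bump_slope_add_weighted_quadratic_nonneg hs using 2
    ring
  · have hs_pos : 0 < s := lt_of_lt_of_le (by norm_num) hs.1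
    have one_le_sqrt_two : 1 ≤ √(2 : ℝ) := Real.one_le_sqrt.2 one_le_two
    rw [abs_of_nonneg (div_nonneg quarticBump_nonneg (by norm_num))]
    calc quarticBump (1 / 10) 1 s / 8
        ≤ (1 - 1 / 10) ^ 3 / 4 * (s - 1 / 10) / 8 := by gcongr; exact quarticBump_le hs
      _ ≤ 1 / 16 * s := by linarith
      _ ≤ √2 / 16 * s := by gcongr
end

section
/- Let M > 0, K ≥ 0, C ≥ 1, T > 0 and let I : [0, T] → [0, ∞) be a measurable function such that: (i) I(t′) ≤ C·I(t) whenever 0 ≤ t ≤ t′ ≤ T; (ii) ∫_0^T I(s) ds ≤ K·M; (iii) I(0) ≤ K. Then I(s) ≤ 4C·K·M/(M + s) for every s ∈ [0, T]. -/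
open MeasureTheory

/-!
By almost-monotonicity, `I s` is at most `C` times every earlier value of `I`. Comparing with
`I 0` gives `I s ≤ C * K`, and averaging over `[0, s]` gives `I s * s ≤ C * (K * M)`. Adding `M`
times the first bound to the second yields the decay, even with constant `2` in place of `4`.
-/

theorem mul_measure_le_mul_setLIntegral {α : Type*} [MeasurableSpace α] {μ : Measure α}
    {S : Set α} (hS : MeasurableSet S) {f : α → ENNReal} {c C : ENNReal} (hC : C ≠ ⊤)
    (hf : ∀ t ∈ S, c ≤ C * f t) :
    c * μ S ≤ C * ∫⁻ t in S, f t ∂μ :=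
  calc c * μ S = ∫⁻ _ in S, c ∂μ := (setLIntegral_const S c).symm
    _ ≤ ∫⁻ t in S, C * f t ∂μ := setLIntegral_mono' hS hf
    _ = C * ∫⁻ t in S, f t ∂μ := lintegral_const_mul' C f hC

theorem mul_sub_le_mul_of_setLIntegral_le {f : ℝ → ℝ} {a b c A C : ℝ} (hab : a ≤ b)
    (hA : 0 ≤ A) (hC : 0 ≤ C) (hf : ∀ t ∈ Set.Icc a b, c ≤ C * f t)
    (hint : ∫⁻ t in Set.Icc a b, ENNReal.ofReal (f t) ≤ ENNReal.ofReal A) :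
    c * (b - a) ≤ C * A := by
  have hf_ofReal : ∀ t ∈ Set.Icc a b,
      ENNReal.ofReal c ≤ ENNReal.ofReal C * ENNReal.ofReal (f t) := fun t ht ↦ by
    rw [← ENNReal.ofReal_mul hC]
    exact ENNReal.ofReal_le_ofReal (hf t ht)
  rw [← ENNReal.ofReal_le_ofReal_iff (mul_nonneg hC hA)]
  calc ENNReal.ofReal (c * (b - a))
      = ENNReal.ofReal c * volume (Set.Icc a b) := by
        rw [ENNReal.ofReal_mul' (sub_nonneg.2 hab), Real.volume_Icc]
    _ ≤ ENNReal.ofReal C * ∫⁻ t in Set.Icc a b, ENNReal.ofReal (f t) :=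
        mul_measure_le_mul_setLIntegral measurableSet_Icc ENNReal.ofReal_ne_top hf_ofReal
    _ ≤ ENNReal.ofReal C * ENNReal.ofReal A := by gcongr
    _ = ENNReal.ofReal (C * A) := (ENNReal.ofReal_mul hC).symm

theorem pigeonhole_decay_general {M K C T : ℝ} {I : ℝ → ℝ}
    (hM : 0 < M) (hK : 0 ≤ K) (hC : 0 ≤ C)
    (hmono : ∀ t t' : ℝ, 0 ≤ t → t ≤ t' → t' ≤ T → I t' ≤ C * I t)
    (hint : ∫⁻ s in Set.Icc (0 : ℝ) T, ENNReal.ofReal (I s) ≤ ENNReal.ofReal (K * M))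
    (h0 : I 0 ≤ K) :
    ∀ s ∈ Set.Icc (0 : ℝ) T, I s ≤ 2 * C * K * M / (M + s) := by
  rintro s ⟨hs, hsT⟩
  have bound_of_initial : I s ≤ C * K :=
    (hmono 0 s le_rfl hs hsT).trans (mul_le_mul_of_nonneg_left h0 hC)
  have hint_s : ∫⁻ t in Set.Icc 0 s, ENNReal.ofReal (I t) ≤ ENNReal.ofReal (K * M) :=
    (lintegral_mono_set (Set.Icc_subset_Icc_right hsT)).trans hint
  have bound_of_average : I s * (s - 0) ≤ C * (K * M) :=
    mul_sub_le_mul_of_setLIntegral_le hs (mul_nonneg hK hM.le) hC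
      (fun t ht ↦ hmono t s ht.1 ht.2 hsT) hint_s
  rw [le_div_iff₀ (add_pos_of_pos_of_nonneg hM hs)]
  calc I s * (M + s) = I s * M + I s * (s - 0) := by ring
    _ ≤ C * K * M + C * (K * M) := by gcongr
    _ = 2 * C * K * M := by ring

/-- The abstract pigeonhole decay argument from the proof of Corollary 1.7: a nonnegative,
measurable, almost-monotone quantity `I` on `[0, T]` with `∫_0^T I ≤ KM` and `I(0) ≤ K`
decays at the rate `I(s) ≤ 4CKM/(M+s)`. -/
theorem pigeonhole_decay (M K C T : ℝ) (I : ℝ → ℝ)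
    (hM : 0 < M) (hK : 0 ≤ K) (hC : 1 ≤ C) (hT : 0 < T)
    (hmeas : Measurable I)
    (hnonneg : ∀ t ∈ Set.Icc (0 : ℝ) T, 0 ≤ I t)
    (hmono : ∀ t t' : ℝ, 0 ≤ t → t ≤ t' → t' ≤ T → I t' ≤ C * I t)
    (hint : (∫⁻ s in Set.Icc (0 : ℝ) T, ENNReal.ofReal (I s)) ≤ ENNReal.ofReal (K * M))
    (h0 : I 0 ≤ K) :
    ∀ s ∈ Set.Icc (0 : ℝ) T, I s ≤ 4 * C * K * M / (M + s) := by
  intro s hs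
  have hC₀ : 0 ≤ C := zero_le_one.trans hC
  have hMs : 0 ≤ M + s := add_nonneg hM.le hs.1
  calc I s ≤ 2 * C * K * M / (M + s) := pigeonhole_decay_general hM hK hC₀ hmono hint h0 s hs
    _ ≤ 4 * C * K * M / (M + s) := by gcongr; norm_num
end
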